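/- arXiv:0901.0342 — 15 statements merged into one kernel-verified Lean document; each statement's English description precedes it below -/
import Mathlib

section
/- Let r ≥ 1 and let (m₁, m₂) be a commuting pair of r×r complex matrices. The GL_r(ℂ)-orbit {(g m₁ g⁻¹, g m₂ g⁻¹) : g ∈ GL_r(ℂ)} is a closed subset of M_r(ℂ) × M_r(ℂ) if and only if m₁ and m₂ are simultaneously diagonalizable, i.e. there exists g ∈ GL_r(ℂ) such that g m₁ g⁻¹ and g m₂ g⁻¹ are both diagonal matrices. -/
open Matrix

/-- The orbit of a pair of `r × r` complex matrices under the simultaneous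
conjugation action of `GL r ℂ`. -/
def conjOrbit (r : ℕ) (m₁ m₂ : Matrix (Fin r) (Fin r) ℂ) :
    Set (Matrix (Fin r) (Fin r) ℂ × Matrix (Fin r) (Fin r) ℂ) :=
  {p | ∃ g : GL (Fin r) ℂ, p = (g.val * m₁ * g⁻¹.val, g.val * m₂ * g⁻¹.val)}


lemma exists_gl {r : ℕ} (b : Module.Basis (Fin r) ℂ (Fin r → ℂ)) :
    ∃ g : GL (Fin r) ℂ, ∀ A : Matrix (Fin r) (Fin r) ℂ,
      g.val * A * g⁻¹.val = LinearMap.toMatrix b b (Matrix.toLin' A) := by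
  let e := Pi.basisFun ℂ (Fin r)
  refine ⟨⟨b.toMatrix e, e.toMatrix b, b.toMatrix_mul_toMatrix_flip e,
    e.toMatrix_mul_toMatrix_flip b⟩, fun A => ?_⟩
  have := basis_toMatrix_mul_linearMap_toMatrix_mul_basis_toMatrix b e b e (Matrix.toLin' A)
  rw [← this]
  congr 2
  exact (LinearMap.toMatrix'_toLin' A).symm

lemma exists_hyper {V : Type*} [AddCommGroup V] [Module ℂ V] [FiniteDimensional ℂ V] [Nontrivial V]
    (f g : Module.End ℂ V) (h : Commute f g) :
    ∃ (φ : Module.Dual ℂ V) (a b : ℂ), φ ≠ 0 ∧ (∀ v, φ (f v) = a * φ v) ∧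
      (∀ v, φ (g v) = b * φ v) := by
  let F : Module.End ℂ (Module.Dual ℂ V) := f.dualMap
  let G : Module.End ℂ (Module.Dual ℂ V) := g.dualMap
  have hFG : ∀ φ, F (G φ) = G (F φ) := by
    intro φ
    ext v
    have := LinearMap.congr_fun h.eq v
    simp only [Module.End.mul_apply] at this
    simp [F, G, this]
  obtain ⟨a, ha⟩ := Module.End.exists_eigenvalue F
  have hm : ∀ x ∈ F.eigenspace a, G x ∈ F.eigenspace a := by
    intro x hx
    rw [Module.End.mem_eigenspace_iff] at hx ⊢
    rw [hFG, hx, map_smul]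
  have : Nontrivial (F.eigenspace a) := (Submodule.nontrivial_iff_ne_bot).2 ha
  obtain ⟨b, hb⟩ := Module.End.exists_eigenvalue (G.restrict hm)
  obtain ⟨φ, hφ⟩ := hb.exists_hasEigenvector
  refine ⟨φ.1, a, b, fun h => hφ.2 (Subtype.ext h), fun v => ?_, fun v => ?_⟩
  · have := Module.End.mem_eigenspace_iff.1 φ.2
    simpa [F] using LinearMap.congr_fun this v
  · have := congrArg Subtype.val hφ.apply_eq_smul
    simpa [G] using LinearMap.congr_fun this v

lemma exists_tri (n : ℕ) : ∀ {V : Type} [AddCommGroup V] [Module ℂ V] [FiniteDimensional ℂ V]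
    (_ : Module.finrank ℂ V = n) (f g : Module.End ℂ V) (_ : Commute f g),
    ∃ b : Module.Basis (Fin n) ℂ V, ∀ i j, j < i →
      b.repr (f (b i)) j = 0 ∧ b.repr (g (b i)) j = 0 := by
  induction n with
  | zero =>
    intro V _ _ _ h f g _
    exact ⟨Module.finBasisOfFinrankEq ℂ V h, fun i => i.elim0⟩
  | succ n ih =>
    intro V _ _ _ h f g hc
    have : Nontrivial V := Module.nontrivial_of_finrank_pos (R := ℂ) (by omega)
    obtain ⟨φ, a, c, hφ, hf, hg⟩ := exists_hyper f g hc
    let N := LinearMap.ker φ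
    have hfN : ∀ x ∈ N, f x ∈ N := fun x hx => by
      simp only [N, LinearMap.mem_ker] at hx ⊢; rw [hf, hx, mul_zero]
    have hgN : ∀ x ∈ N, g x ∈ N := fun x hx => by
      simp only [N, LinearMap.mem_ker] at hx ⊢; rw [hg, hx, mul_zero]
    have hN : Module.finrank ℂ N = n := by
      have := Module.Dual.finrank_ker_add_one_of_ne_zero hφ
      simp only [N]; omega
    have hcN : Commute (f.restrict hfN) (g.restrict hgN) := by
      ext x
      exact LinearMap.congr_fun hc.eq x.1
    obtain ⟨b, hb⟩ := ih hN (f.restrict hfN) (g.restrict hgN) hcN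
    obtain ⟨y, hy⟩ : ∃ y, φ y ≠ 0 := by
      by_contra! hh
      exact hφ (LinearMap.ext hh)
    have hli : ∀ (c : ℂ), ∀ x ∈ N, c • y + x = 0 → c = 0 := by
      intro c x hx h0
      have := congrArg φ h0
      simp only [map_add, map_smul, LinearMap.mem_ker.1 hx, map_zero, add_zero, smul_eq_mul] at this
      exact (mul_eq_zero.1 this).resolve_right hy
    have hsp : ∀ z : V, ∃ c : ℂ, z + c • y ∈ N := by
      intro z
      refine ⟨-(φ z / φ y), ?_⟩
      simp only [N, LinearMap.mem_ker, map_add, map_smul, smul_eq_mul]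
      field_simp; ring
    let B := Module.Basis.mkFinCons y b hli hsp
    have hB : ∀ i : Fin n, B i.succ = (b i : V) := by intro i; simp [B]
    have key : ∀ x : N, B.repr (x : V) 0 = 0 ∧ ∀ j : Fin n, B.repr (x:V) j.succ = b.repr x j := by
      intro x
      have hx : (x : V) = ∑ k, b.repr x k • B k.succ := by
        have := congrArg Subtype.val (b.sum_repr x)
        rw [← this, AddSubmonoidClass.coe_finsetSum]
        simp only [hB, Submodule.coe_smul, b.sum_repr]
      constructor
      · rw [hx]; simp
      · intro j; rw [hx]; simp [Finsupp.single_apply]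
    refine ⟨B, fun i j hij => ?_⟩
    obtain ⟨i, rfl⟩ := Fin.exists_succ_eq.2 (Fin.ne_zero_of_lt hij)
    have e1 := key (f.restrict hfN (b i))
    have e2 := key (g.restrict hgN (b i))
    rw [LinearMap.coe_restrict_apply, ← hB] at e1 e2
    refine Fin.cases (fun _ => ⟨e1.1, e2.1⟩) (fun j hij => ?_) j hij
    rw [e1.2, e2.2]
    exact hb i j (by simpa using hij)

lemma dir1 (r : ℕ) (m₁ m₂ : Matrix (Fin r) (Fin r) ℂ)
    (hcomm : m₁ * m₂ = m₂ * m₁) (hcl : IsClosed (conjOrbit r m₁ m₂)) :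
      ∃ g : GL (Fin r) ℂ,
        (g.val * m₁ * g⁻¹.val).IsDiag ∧ (g.val * m₂ * g⁻¹.val).IsDiag := by
  obtain ⟨b, hb⟩ := exists_tri r (V := Fin r → ℂ) (by simp) (Matrix.toLin' m₁) (Matrix.toLin' m₂)
    (by
      change Matrix.toLin' m₁ * Matrix.toLin' m₂ = Matrix.toLin' m₂ * Matrix.toLin' m₁
      rw [Module.End.mul_eq_comp, Module.End.mul_eq_comp, ← Matrix.toLin'_mul, hcomm,
        Matrix.toLin'_mul])
  obtain ⟨g, hg⟩ := exists_gl b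
  let c : Matrix (Fin r) (Fin r) ℂ → ℂ → Matrix (Fin r) (Fin r) ℂ := fun m s =>
    Matrix.of fun j i => (g.val * m * g⁻¹.val) j i * s ^ ((j : ℕ) - (i : ℕ))
  have hT : ∀ i j, j < i → (g.val * m₁ * g⁻¹.val) j i = 0 ∧ (g.val * m₂ * g⁻¹.val) j i = 0 := by
    intro i j hij
    rw [hg, hg, LinearMap.toMatrix_apply, LinearMap.toMatrix_apply]
    exact hb i j hij
  have hcont : Continuous fun s => (c m₁ s, c m₂ s) := by
    refine Continuous.prodMk ?_ ?_ <;>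
    · refine continuous_matrix fun j i => ?_
      simp only [c, Matrix.of_apply]
      fun_prop
  have hconj : ∀ s : ℂ, s ≠ 0 → ∃ h : GL (Fin r) ℂ, ∀ m : Matrix (Fin r) (Fin r) ℂ,
      (∀ i j, j < i → (g.val * m * g⁻¹.val) j i = 0) → c m s = h.val * m * h⁻¹.val := by
    intro s hs
    let D : GL (Fin r) ℂ := ⟨diagonal fun i => s ^ (i : ℕ), diagonal fun i => (s ^ (i : ℕ))⁻¹,
      by simp [hs], by simp [hs]⟩
    refine ⟨D * g, fun m hm => ?_⟩
    have e : (D * g).val * m * (D * g)⁻¹.val = D.val * (g.val * m * g⁻¹.val) * D⁻¹.val := by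
      simp only [_root_.mul_inv_rev, Units.val_mul, mul_assoc]
    rw [e]
    ext j i
    change _ = (diagonal (fun i : Fin r => s ^ (i : ℕ)) * (g.val * m * g⁻¹.val) *
      diagonal fun i : Fin r => (s ^ (i : ℕ))⁻¹) j i
    rw [Matrix.mul_diagonal, Matrix.diagonal_mul]
    simp only [c, Matrix.of_apply]
    rcases lt_or_ge j i with h | h
    · rw [hm i j h]; simp
    · rw [pow_sub₀ s hs (by exact_mod_cast h)]; ring
  have h0 : (c m₁ 0, c m₂ 0) ∈ conjOrbit r m₁ m₂ := by
    have hd : Dense ({0}ᶜ : Set ℂ) := dense_compl_singleton 0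
    have hsub : ({0}ᶜ : Set ℂ) ⊆ (fun s => (c m₁ s, c m₂ s)) ⁻¹' conjOrbit r m₁ m₂ := by
      intro s hs
      obtain ⟨h, hh⟩ := hconj s hs
      refine ⟨h, ?_⟩
      change (c m₁ s, c m₂ s) = _
      rw [hh m₁ fun i j hij => (hT i j hij).1, hh m₂ fun i j hij => (hT i j hij).2]
    have := (hcl.preimage hcont).closure_subset_iff.2 hsub
    exact this (hd 0)
  have hdiag : ∀ m : Matrix (Fin r) (Fin r) ℂ,
      (∀ i j, j < i → (g.val * m * g⁻¹.val) j i = 0) → (c m 0).IsDiag := by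
    intro m hm j i hji
    simp only [c, Matrix.of_apply]
    rcases lt_or_ge j i with h | h
    · rw [hm i j h]; simp
    · have : i < j := lt_of_le_of_ne h (Ne.symm hji)
      rw [zero_pow (by have : (i:ℕ) < j := this; omega), mul_zero]
  obtain ⟨h, hh⟩ := h0
  rw [Prod.mk.injEq] at hh
  refine ⟨h, ?_, ?_⟩
  · rw [← hh.1]; exact hdiag m₁ fun i j hij => (hT i j hij).1
  · rw [← hh.2]; exact hdiag m₂ fun i j hij => (hT i j hij).2

open Polynomial in
lemma aeval_conj {r : ℕ} (g : GL (Fin r) ℂ) (A : Matrix (Fin r) (Fin r) ℂ) (f : ℂ[X]) :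
    aeval (g.val * A * g⁻¹.val) f = g.val * aeval A f * g⁻¹.val := by
  induction f using Polynomial.induction_on' with
  | add p q hp hq => simp only [map_add, hp, hq, mul_add, add_mul]
  | monomial n a =>
    have : (g.val * A * g⁻¹.val) ^ n = g.val * A ^ n * g⁻¹.val := Units.conj_pow g A n
    rw [aeval_monomial, aeval_monomial, this, ← Algebra.smul_def, ← Algebra.smul_def]
    simp

open Polynomial in
lemma aeval_diag {r : ℕ} (c : Fin r → ℂ) (f : ℂ[X]) :
    aeval (diagonal c) f = diagonal fun i => f.eval (c i) := by
  have := Polynomial.aeval_algHom_apply (Matrix.diagonalAlgHom ℂ (n := Fin r) (α := ℂ)) c f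
  rw [Matrix.diagonalAlgHom_apply] at this
  rw [this, Matrix.diagonalAlgHom_apply]
  congr 1
  ext i
  have := Polynomial.aeval_algHom_apply (Pi.evalAlgHom ℂ (fun _ : Fin r => ℂ) i) c f
  simpa [Polynomial.aeval_def] using this.symm

open Polynomial in
lemma exists_conj {r : ℕ} (c : Fin r → ℂ) (M : Matrix (Fin r) (Fin r) ℂ)
    (hq : aeval M (∏ x ∈ Finset.univ.image c, (X - C x)) = 0)
    (hch : M.charpoly = (diagonal c).charpoly) :
    ∃ g : GL (Fin r) ℂ, g.val * M * g⁻¹.val = diagonal c := by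
  let f : Module.End ℂ (Fin r → ℂ) := Matrix.toLin' M
  have hss : f.IsSemisimple := by
    refine Module.End.isSemisimple_of_squarefree_aeval_eq_zero
      (p := ∏ x ∈ Finset.univ.image c, (X - C x)) ?_ ?_
    · apply Separable.squarefree
      rw [separable_prod_X_sub_C_iff']
      intro x _ y _ h; exact h
    · have := Polynomial.aeval_algHom_apply (Matrix.toLinAlgEquiv' (R := ℂ) (n := Fin r)) M
        (∏ x ∈ Finset.univ.image c, (X - C x))
      rw [hq, map_zero] at this
      exact this
  have htop : ⨆ μ, f.eigenspace μ = ⊤ := by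
    rw [← hss.iSup_maxGenEigenspace_eq_top_iff]
    exact Module.End.iSup_maxGenEigenspace_eq_top f
  have hint := DirectSum.isInternal_submodule_of_iSupIndep_of_iSup_eq_top
    f.eigenspaces_iSupIndep htop
  let b0 := hint.collectedBasis fun μ => Module.finBasis ℂ (f.eigenspace μ)
  let e := b0.indexEquiv (Pi.basisFun ℂ (Fin r))
  let b1 := b0.reindex e
  have hb1 : ∀ i, f (b1 i) = (e.symm i).1 • b1 i := by
    intro i
    have := hint.collectedBasis_mem (fun μ => Module.finBasis ℂ (f.eigenspace μ)) (e.symm i)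
    rw [Module.End.mem_eigenspace_iff] at this
    simpa [b1, b0] using this
  obtain ⟨d, hd⟩ : ∃ d : Fin r → ℂ, ∀ i, f (b1 i) = d i • b1 i := ⟨_, hb1⟩
  have hmat : ∀ (b : Module.Basis (Fin r) ℂ (Fin r → ℂ)) (d : Fin r → ℂ),
      (∀ i, f (b i) = d i • b i) → LinearMap.toMatrix b b f = diagonal d := by
    intro b d h
    ext i j
    rw [LinearMap.toMatrix_apply, h]
    by_cases hij : i = j
    · subst hij; simp
    · simp [Matrix.diagonal_apply_ne _ hij, Finsupp.single_apply, Ne.symm hij]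
  have hroots : Multiset.map d Finset.univ.val = Multiset.map c Finset.univ.val := by
    have h1 : (diagonal d).charpoly = (diagonal c).charpoly := by
      rw [← hch, ← hmat b1 d hd, LinearMap.charpoly_toMatrix, ← LinearMap.charpoly_toMatrix f
        (Pi.basisFun ℂ (Fin r))]
      congr 1
      exact LinearMap.toMatrix'_toLin' M
    rw [Matrix.charpoly_diagonal, Matrix.charpoly_diagonal] at h1
    have h2 := congrArg Polynomial.roots h1
    have h3 : ∀ d : Fin r → ℂ, (∏ i, (X - C (d i))).roots = Multiset.map d Finset.univ.val := by
      intro d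
      have := Polynomial.roots_multiset_prod_X_sub_C (Multiset.map d Finset.univ.val)
      rw [Multiset.map_map] at this
      exact this
    rwa [h3, h3] at h2
  obtain ⟨σ, hσ⟩ : ∃ σ : Equiv.Perm (Fin r), d ∘ σ = c := by
    have hcard : ∀ x, Nonempty ({i // c i = x} ≃ {i // d i = x}) := by
      intro x
      refine ⟨Fintype.equivOfCardEq ?_⟩
      have := congrArg (Multiset.count x) hroots
      rw [Multiset.count_map, Multiset.count_map] at this
      rw [Fintype.card_subtype, Fintype.card_subtype]
      simp only [eq_comm (b := x)]
      exact this.symm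
    refine ⟨Equiv.ofFiberEquiv (fun x => (hcard x).some), ?_⟩
    ext i
    exact Equiv.ofFiberEquiv_map _ i
  obtain ⟨g, hg⟩ := exists_gl (b1.reindex σ.symm)
  refine ⟨g, ?_⟩
  rw [hg]
  refine hmat _ _ fun i => ?_
  rw [← hσ]
  simp [hd]

lemma exists_sep {r : ℕ} (a b : Fin r → ℂ) :
    ∃ t : ℂ, ∀ i j, a i + t * b i = a j + t * b j → a i = a j ∧ b i = b j := by
  obtain ⟨t, ht⟩ := Infinite.exists_notMem_finset
    (Finset.univ.image fun p : Fin r × Fin r => -(a p.1 - a p.2) / (b p.1 - b p.2))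
  refine ⟨t, fun i j h => ?_⟩
  by_cases hb : b i = b j
  · rw [hb] at h
    exact ⟨add_right_cancel h, hb⟩
  · exfalso
    apply ht
    rw [Finset.mem_image]
    refine ⟨(i, j), Finset.mem_univ _, ?_⟩
    have : b i - b j ≠ 0 := sub_ne_zero.2 hb
    simp only
    field_simp
    linear_combination -h

open Polynomial in
lemma exists_interp {r : ℕ} (a c : Fin r → ℂ) (h : ∀ i j, c i = c j → a i = a j) :
    ∃ f : ℂ[X], ∀ i, f.eval (c i) = a i := by
  classical
  let F : ℂ → ℂ := fun x => if h : ∃ i, c i = x then a h.choose else 0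
  refine ⟨Lagrange.interpolate (Finset.univ.image c) id F, fun i => ?_⟩
  have := Lagrange.eval_interpolate_at_node (s := Finset.univ.image c) (v := id) F
    (Function.injective_id.injOn) (Finset.mem_image_of_mem c (Finset.mem_univ i))
  rw [id] at this
  rw [this]
  have hex : ∃ j, c j = c i := ⟨i, rfl⟩
  simp only [F, dif_pos hex]
  exact h _ _ hex.choose_spec

open Polynomial in
set_option maxHeartbeats 1000000 in
lemma dir2 (r : ℕ) (m₁ m₂ : Matrix (Fin r) (Fin r) ℂ)
    (g : GL (Fin r) ℂ) (h1 : (g.val * m₁ * g⁻¹.val).IsDiag) (h2 : (g.val * m₂ * g⁻¹.val).IsDiag) :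
    IsClosed (conjOrbit r m₁ m₂) := by
  obtain ⟨a, ha⟩ : ∃ a, g.val * m₁ * g⁻¹.val = diagonal a := ⟨_, h1.diagonal_diag.symm⟩
  obtain ⟨b, hb⟩ : ∃ a, g.val * m₂ * g⁻¹.val = diagonal a := ⟨_, h2.diagonal_diag.symm⟩
  have back : ∀ (k : GL (Fin r) ℂ) (m d : Matrix (Fin r) (Fin r) ℂ),
      k.val * m * k⁻¹.val = d → m = k⁻¹.val * d * (k⁻¹)⁻¹.val := by
    intro k m d h
    rw [← h, inv_inv]
    simp [mul_assoc]
  have ha' := back g m₁ _ ha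
  have hb' := back g m₂ _ hb
  obtain ⟨t, ht⟩ := exists_sep a b
  let c : Fin r → ℂ := fun i => a i + t * b i
  obtain ⟨p₁, hp₁⟩ := exists_interp a c fun i j h => (ht i j h).1
  obtain ⟨p₂, hp₂⟩ := exists_interp b c fun i j h => (ht i j h).2
  let q : ℂ[X] := ∏ x ∈ Finset.univ.image c, (X - C x)
  have hdc : diagonal a + t • diagonal b = diagonal c := by
    rw [← Matrix.diagonal_smul, Matrix.diagonal_add]; rfl
  have hcp : ∀ u : GL (Fin r) ℂ, (u.val * diagonal c * u⁻¹.val).charpoly =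
      (diagonal c).charpoly := by
    intro u
    rw [Matrix.coe_units_inv]
    exact Matrix.charpoly_units_conj u (diagonal c)
  have hset : conjOrbit r m₁ m₂ = {p | p.1 = aeval (p.1 + t • p.2) p₁ ∧
      p.2 = aeval (p.1 + t • p.2) p₂ ∧ aeval (p.1 + t • p.2) q = 0 ∧
      ∀ x : ℂ, (scalar (Fin r) x - (p.1 + t • p.2)).det =
        (scalar (Fin r) x - diagonal c).det} := by
    ext ⟨A, B⟩
    constructor
    · rintro ⟨k, hk⟩
      rw [Prod.mk.injEq] at hk
      let u : GL (Fin r) ℂ := k * g⁻¹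
      have hA : A = u.val * diagonal a * u⁻¹.val := by
        rw [hk.1, ha']; simp only [u, _root_.mul_inv_rev, Units.val_mul, mul_assoc]
      have hB : B = u.val * diagonal b * u⁻¹.val := by
        rw [hk.2, hb']; simp only [u, _root_.mul_inv_rev, Units.val_mul, mul_assoc]
      have hM : A + t • B = u.val * diagonal c * u⁻¹.val := by
        rw [hA, hB, ← hdc, mul_add, add_mul]; simp
      simp only [Set.mem_ofPred_eq]
      rw [hM]
      simp only [aeval_conj, aeval_diag, hp₁, hp₂]
      refine ⟨hA, hB, ?_, fun x => ?_⟩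
      · have : (fun i => q.eval (c i)) = 0 := by
          ext i
          simp only [q, eval_prod, Pi.zero_apply]
          exact Finset.prod_eq_zero (Finset.mem_image_of_mem c (Finset.mem_univ i)) (by simp)
        rw [this]; simp
      · rw [← Matrix.eval_charpoly, ← Matrix.eval_charpoly]
        rw [hcp u]
    · simp only [Set.mem_ofPred_eq]
      rintro ⟨hA, hB, hq, hdet⟩
      obtain ⟨k, hk⟩ := exists_conj c (A + t • B) hq (by
        apply Polynomial.funext
        intro x
        rw [Matrix.eval_charpoly, Matrix.eval_charpoly, hdet])
      have hk' := back k _ _ hk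
      rw [hk', aeval_conj, aeval_diag] at hA hB
      simp only [hp₁, hp₂] at hA hB
      refine ⟨k⁻¹ * g, ?_⟩
      rw [hA, hB, ← ha, ← hb]
      simp only [_root_.mul_inv_rev, Units.val_mul, mul_assoc]
  rw [hset]
  simp only [Set.ofPred_and, Set.ofPred_forall]
  have hM : Continuous fun p : Matrix (Fin r) (Fin r) ℂ × Matrix (Fin r) (Fin r) ℂ =>
      p.1 + t • p.2 := by fun_prop
  have hpoly : ∀ f : ℂ[X], Continuous
      fun p : Matrix (Fin r) (Fin r) ℂ × Matrix (Fin r) (Fin r) ℂ =>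
      aeval (p.1 + t • p.2) f := fun f => (Polynomial.continuous_aeval f).comp hM
  refine (isClosed_eq continuous_fst (hpoly _)).inter <|
    (isClosed_eq continuous_snd (hpoly _)).inter <|
    (isClosed_eq (hpoly _) continuous_const).inter ?_
  refine isClosed_iInter fun x => isClosed_eq ?_ continuous_const
  exact (continuous_const.sub hM).matrix_det

/-- The `GL r ℂ`-orbit of a commuting pair of matrices is closed iff the pair is
simultaneously diagonalizable. -/
theorem stmt0 (r : ℕ) (hr : 1 ≤ r) (m₁ m₂ : Matrix (Fin r) (Fin r) ℂ)
    (hcomm : m₁ * m₂ = m₂ * m₁) :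
    IsClosed (conjOrbit r m₁ m₂) ↔
      ∃ g : GL (Fin r) ℂ,
        (g.val * m₁ * g⁻¹.val).IsDiag ∧ (g.val * m₂ * g⁻¹.val).IsDiag := by
  exact ⟨dir1 r m₁ m₂ hcomm, fun ⟨g, h1, h2⟩ => dir2 r m₁ m₂ g h1 h2⟩
end

section
/- Let r ≥ 1 and let (m₁, m₂) be a commuting pair of r×r complex matrices. Then there exist diagonal matrices d₁, d₂ ∈ M_r(ℂ) such that (d₁, d₂) lies in the topological closure of the GL_r(ℂ)-orbit of (m₁, m₂), and moreover the characteristic polynomial of d₁ equals that of m₁ and the characteristic polynomial of d₂ equals that of m₂. -/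
open Matrix

lemma common_eigen {n : ℕ} (A B : Matrix (Fin (n+1)) (Fin (n+1)) ℂ) (h : A * B = B * A) :
    ∃ v : Fin (n+1) → ℂ, v ≠ 0 ∧ ∃ a b : ℂ, A *ᵥ v = a • v ∧ B *ᵥ v = b • v := by
  obtain ⟨a, ha⟩ := Module.End.exists_eigenvalue (Matrix.toLin' A)
  have hm : ∀ x ∈ Module.End.eigenspace (Matrix.toLin' A) a,
      Matrix.toLin' B x ∈ Module.End.eigenspace (Matrix.toLin' A) a := by
    intro x hx
    rw [Module.End.mem_eigenspace_iff] at hx ⊢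
    simp only [Matrix.toLin'_apply] at hx ⊢
    rw [Matrix.mulVec_mulVec, h, ← Matrix.mulVec_mulVec, hx, Matrix.mulVec_smul]
  have : Nontrivial (Module.End.eigenspace (Matrix.toLin' A) a) :=
    Submodule.nontrivial_iff_ne_bot.mpr ha
  obtain ⟨b, hb⟩ := Module.End.exists_eigenvalue ((Matrix.toLin' B).restrict hm)
  obtain ⟨w, hw⟩ := hb.exists_hasEigenvector
  refine ⟨w.1, fun h0 => hw.2 (Subtype.ext h0), a, b, ?_, ?_⟩
  · have := Module.End.mem_eigenspace_iff.mp w.2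
    simpa using this
  · have := congrArg Subtype.val hw.apply_eq_smul
    simpa using this

def blkM {n : ℕ} (g : Matrix (Fin n) (Fin n) ℂ) : Matrix (Fin (n+1)) (Fin (n+1)) ℂ :=
  Matrix.of (Fin.cons (Fin.cons 1 0) (fun i => Fin.cons 0 (g i)))

lemma blkM_mul {n : ℕ} (g h : Matrix (Fin n) (Fin n) ℂ) :
    blkM g * blkM h = blkM (g * h) := by
  ext i j
  refine Fin.cases ?_ (fun i => ?_) i <;> refine Fin.cases ?_ (fun j => ?_) j <;>
    simp [blkM, Matrix.mul_apply, Fin.sum_univ_succ]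

lemma blkM_one {n : ℕ} : blkM (1 : Matrix (Fin n) (Fin n) ℂ) = 1 := by
  ext i j
  refine Fin.cases ?_ (fun i => ?_) i <;> refine Fin.cases ?_ (fun j => ?_) j <;>
    simp [blkM, Matrix.one_apply, Fin.succ_ne_zero, (Fin.succ_ne_zero _).symm]

def liftU {n : ℕ} (g : (Matrix (Fin n) (Fin n) ℂ)ˣ) : (Matrix (Fin (n+1)) (Fin (n+1)) ℂ)ˣ :=
  ⟨blkM g.val, blkM g⁻¹.val, by rw [blkM_mul, Units.mul_inv, blkM_one],
    by rw [blkM_mul, Units.inv_mul, blkM_one]⟩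

lemma lift_tri {n : ℕ} (g : (Matrix (Fin n) (Fin n) ℂ)ˣ) (N : Matrix (Fin (n+1)) (Fin (n+1)) ℂ)
    (h0 : ∀ i : Fin n, N i.succ 0 = 0)
    (ht : ∀ i j : Fin n, j < i → (g.val * N.submatrix Fin.succ Fin.succ * g⁻¹.val) i j = 0)
    (i j : Fin (n+1)) (hij : j < i) :
    ((liftU g).val * N * (liftU g)⁻¹.val) i j = 0 := by
  change (blkM g.val * N * blkM g⁻¹.val) i j = 0
  revert hij
  refine Fin.cases ?_ (fun i => ?_) i <;> refine Fin.cases ?_ (fun j => ?_) j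
  · simp
  · simp
  · intro _
    simp [blkM, Matrix.mul_apply, Fin.sum_univ_succ, h0]
  · intro hij
    have := ht i j (by simpa using hij)
    simpa [blkM, Matrix.mul_apply, Fin.sum_univ_succ, h0] using this

lemma exists_unit_col {n : ℕ} (v : Fin (n+1) → ℂ) (hv : v ≠ 0) :
    ∃ P : (Matrix (Fin (n+1)) (Fin (n+1)) ℂ)ˣ, P.val *ᵥ (Pi.single 0 1) = v := by
  obtain ⟨e, he⟩ := SeparatingDual.exists_continuousLinearEquiv_apply_eq (R := ℂ)
    (x := (Pi.single 0 1 : Fin (n+1) → ℂ)) (y := v) (by simp) hv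
  refine ⟨⟨LinearMap.toMatrix' (e.toLinearEquiv : (Fin (n+1) → ℂ) →ₗ[ℂ] (Fin (n+1) → ℂ)),
    LinearMap.toMatrix' (e.symm.toLinearEquiv : (Fin (n+1) → ℂ) →ₗ[ℂ] (Fin (n+1) → ℂ)), ?_, ?_⟩, ?_⟩
  · rw [← LinearMap.toMatrix'_comp, ← LinearMap.toMatrix'_id]
    congr 1
    ext : 2
    simp
  · rw [← LinearMap.toMatrix'_comp, ← LinearMap.toMatrix'_id]
    congr 1
    ext : 2
    simp
  · rw [LinearMap.toMatrix'_mulVec]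
    exact he

lemma simul_tri (n : ℕ) : ∀ A B : Matrix (Fin n) (Fin n) ℂ, A * B = B * A →
    ∃ g : (Matrix (Fin n) (Fin n) ℂ)ˣ,
      (∀ i j, j < i → (g.val * A * g⁻¹.val) i j = 0) ∧
      (∀ i j, j < i → (g.val * B * g⁻¹.val) i j = 0) := by
  induction n with
  | zero => exact fun A B _ => ⟨1, fun i => i.elim0, fun i => i.elim0⟩
  | succ n ih =>
    intro A B h
    obtain ⟨v, hv, a, b, hA, hB⟩ := common_eigen A B h
    obtain ⟨P, hP⟩ := exists_unit_col v hv
    have key : ∀ (M : Matrix (Fin (n+1)) (Fin (n+1)) ℂ) (c : ℂ), M *ᵥ v = c • v →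
        ∀ i : Fin n, (P⁻¹.val * M * P.val) i.succ 0 = 0 := by
      intro M c hM i
      have h1 : (P⁻¹.val * M * P.val) *ᵥ (Pi.single 0 1) = c • Pi.single 0 1 := by
        rw [← Matrix.mulVec_mulVec, hP, ← Matrix.mulVec_mulVec, hM, Matrix.mulVec_smul, ← hP,
          Matrix.mulVec_mulVec, Units.inv_mul, Matrix.one_mulVec]
      have h2 := congrFun h1 i.succ
      simpa using h2
    have hA0 := key A a hA
    have hB0 := key B b hB
    have hc : (P⁻¹.val * A * P.val) * (P⁻¹.val * B * P.val)
        = (P⁻¹.val * B * P.val) * (P⁻¹.val * A * P.val) := by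
      have e : ∀ X Y : Matrix (Fin (n+1)) (Fin (n+1)) ℂ,
          (P⁻¹.val * X * P.val) * (P⁻¹.val * Y * P.val) = P⁻¹.val * (X * Y) * P.val := by
        intro X Y
        simp only [mul_assoc, Units.mul_inv_cancel_left]
      rw [e, e, h]
    have hsub : (P⁻¹.val * A * P.val).submatrix Fin.succ Fin.succ *
        (P⁻¹.val * B * P.val).submatrix Fin.succ Fin.succ =
        (P⁻¹.val * B * P.val).submatrix Fin.succ Fin.succ *
        (P⁻¹.val * A * P.val).submatrix Fin.succ Fin.succ := by
      generalize P⁻¹.val * A * P.val = X at *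
      generalize P⁻¹.val * B * P.val = Y at *
      ext i j
      have := congrFun (congrFun hc i.succ) j.succ
      simpa [Matrix.mul_apply, Fin.sum_univ_succ, hA0, hB0] using this
    obtain ⟨g, hg1, hg2⟩ := ih _ _ hsub
    refine ⟨liftU g * P⁻¹, fun i j hij => ?_, fun i j hij => ?_⟩
    · have := lift_tri g _ hA0 hg1 i j hij
      simpa [mul_assoc] using this
    · have := lift_tri g _ hB0 hg2 i j hij
      simpa [mul_assoc] using this

def scaleM {r : ℕ} (T : Matrix (Fin r) (Fin r) ℂ) (t : ℂ) : Matrix (Fin r) (Fin r) ℂ :=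
  Matrix.of fun i j => T i j * t ^ (j.val - i.val)

lemma scaleM_cont {r : ℕ} (T : Matrix (Fin r) (Fin r) ℂ) : Continuous (scaleM T) := by
  refine continuous_matrix fun i j => ?_
  simp only [scaleM, Matrix.of_apply]
  fun_prop

lemma scaleM_zero {r : ℕ} (T : Matrix (Fin r) (Fin r) ℂ) (hT : ∀ i j, j < i → T i j = 0) :
    scaleM T 0 = Matrix.diagonal (fun i => T i i) := by
  ext i j
  simp only [scaleM, Matrix.of_apply, Matrix.diagonal_apply]
  rcases lt_trichotomy i j with h | h | h
  · have : j.val - i.val ≠ 0 := by have : i.val < j.val := h; omega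
    simp [h.ne, this]
  · subst h; simp
  · simp [hT i j h, h.ne']

noncomputable def diagU (r : ℕ) (t : ℂ) (ht : t ≠ 0) : (Matrix (Fin r) (Fin r) ℂ)ˣ :=
  ⟨Matrix.diagonal fun i => (t ^ i.val)⁻¹, Matrix.diagonal fun i => t ^ i.val,
    by simp [ht], by simp [ht]⟩

lemma scaleM_conj {r : ℕ} (T : Matrix (Fin r) (Fin r) ℂ) (hT : ∀ i j, j < i → T i j = 0)
    (t : ℂ) (ht : t ≠ 0) :
    scaleM T t = (diagU r t ht).val * T * (diagU r t ht)⁻¹.val := by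
  change _ = Matrix.diagonal _ * T * Matrix.diagonal _
  ext i j
  rw [Matrix.mul_diagonal, Matrix.diagonal_mul]
  simp only [scaleM, Matrix.of_apply]
  rcases lt_or_ge j i with h | h
  · simp [hT i j h]
  · have : i.val ≤ j.val := h
    rw [pow_sub₀ _ ht this]
    ring

lemma tri_charpoly {r : ℕ} (T : Matrix (Fin r) (Fin r) ℂ) (hT : ∀ i j, j < i → T i j = 0) :
    (Matrix.diagonal (fun i => T i i)).charpoly = T.charpoly := by
  rw [Matrix.charpoly_of_isUpperTriangular T (fun i j h => hT i j h), Matrix.charpoly_diagonal]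

/-- The closure of the `GL r ℂ`-orbit of a commuting pair of matrices contains a pair of
diagonal matrices with the same characteristic polynomials as the original pair. -/
theorem stmt1 (r : ℕ) (hr : 1 ≤ r) (m₁ m₂ : Matrix (Fin r) (Fin r) ℂ)
    (hcomm : m₁ * m₂ = m₂ * m₁) :
    ∃ d₁ d₂ : Matrix (Fin r) (Fin r) ℂ, d₁.IsDiag ∧ d₂.IsDiag ∧
      (d₁, d₂) ∈ closure (conjOrbit r m₁ m₂) ∧
      d₁.charpoly = m₁.charpoly ∧ d₂.charpoly = m₂.charpoly := by
  obtain ⟨g, h1, h2⟩ := simul_tri r m₁ m₂ hcomm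
  refine ⟨_, _, Matrix.isDiag_diagonal _, Matrix.isDiag_diagonal _, ?_,
    (tri_charpoly _ h1).trans (by simpa using Matrix.charpoly_units_conj g m₁),
    (tri_charpoly _ h2).trans (by simpa using Matrix.charpoly_units_conj g m₂)⟩
  rw [← scaleM_zero _ h1, ← scaleM_zero _ h2]
  have hc : Continuous fun t : ℂ =>
      (scaleM (g.val * m₁ * g⁻¹.val) t, scaleM (g.val * m₂ * g⁻¹.val) t) :=
    (scaleM_cont _).prodMk (scaleM_cont _)
  have h0 : (0 : ℂ) ∈ closure ({0}ᶜ : Set ℂ) := by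
    rw [closure_compl_singleton]; trivial
  suffices hm : Set.MapsTo (fun t : ℂ =>
      (scaleM (g.val * m₁ * g⁻¹.val) t, scaleM (g.val * m₂ * g⁻¹.val) t)) {0}ᶜ
      (conjOrbit r m₁ m₂) by
    have := map_mem_closure hc h0 hm
    exact this
  intro t ht
  change (_, _) ∈ _
  refine ⟨diagU r t ht * g, ?_⟩
  rw [scaleM_conj _ h1 t ht, scaleM_conj _ h2 t ht]
  simp [mul_assoc]
end

section
/- Let r ≥ 1 and let (m₁, m₂) be a commuting pair of r×r complex matrices. If O₁ and O₂ are GL_r(ℂ)-orbits of pairs of matrices that are contained in the topological closure of the orbit of (m₁, m₂), and both O₁ and O₂ are closed subsets of M_r(ℂ) × M_r(ℂ), then O₁ = O₂. In other words, the closure of every orbit of a commuting pair contains a unique closed orbit. -/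
open Matrix

lemma common_eig (V : Type) [AddCommGroup V] [Module ℂ V] [FiniteDimensional ℂ V] [Nontrivial V]
    (f g : Module.End ℂ V) (h : Commute f g) :
    ∃ v : V, v ≠ 0 ∧ ∃ a b : ℂ, f v = a • v ∧ g v = b • v := by
  obtain ⟨a, ha⟩ := Module.End.exists_eigenvalue f
  have hm : Set.MapsTo g (f.eigenspace a) (f.eigenspace a) :=
    Module.End.mapsTo_genEigenspace_of_comm h a 1
  have : Nontrivial (f.eigenspace a) := Submodule.nontrivial_iff_ne_bot.2 ha
  obtain ⟨b, hb⟩ := Module.End.exists_eigenvalue (g.restrict hm)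
  obtain ⟨v, hv⟩ := hb.exists_hasEigenvector
  refine ⟨v.1, fun h => hv.2 (Subtype.ext h), a, b, ?_, ?_⟩
  · exact Module.End.mem_eigenspace_iff.1 v.2
  · have := hv.apply_eq_smul
    exact congrArg Subtype.val this

lemma triang (n : ℕ) : ∀ (V : Type) [AddCommGroup V] [Module ℂ V] [FiniteDimensional ℂ V]
    (_ : Module.finrank ℂ V = n) (f g : Module.End ℂ V) (_ : Commute f g),
    ∃ b : Module.Basis (Fin n) ℂ V, ∀ i j, i < j →
      b.repr (f (b j)) i = 0 ∧ b.repr (g (b j)) i = 0 := by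
  induction n with
  | zero =>
    intro V _ _ _ hV f g h
    exact ⟨Module.finBasisOfFinrankEq ℂ V hV, fun i => i.elim0⟩
  | succ n ih =>
    intro V _ _ _ hV f g h
    have hnt : Nontrivial V := Module.nontrivial_of_finrank_pos (R := ℂ) (by omega)
    have hc : Commute (Module.Dual.transpose (R := ℂ) f : Module.End ℂ (Module.Dual ℂ V))
        (Module.Dual.transpose (R := ℂ) g) := by
      ext φ v
      have := congrArg φ (LinearMap.congr_fun h.eq v)
      exact this.symm
    obtain ⟨φ, hφ, a, c, ha, hb⟩ := common_eig (Module.Dual ℂ V) _ _ hc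
    have ha' : ∀ v, φ (f v) = a * φ v := fun v => LinearMap.congr_fun ha v
    have hb' : ∀ v, φ (g v) = c * φ v := fun v => LinearMap.congr_fun hb v
    have hf : ∀ v ∈ LinearMap.ker φ, f v ∈ LinearMap.ker φ := by
      intro v hv; rw [LinearMap.mem_ker] at *; rw [ha', hv, mul_zero]
    have hg : ∀ v ∈ LinearMap.ker φ, g v ∈ LinearMap.ker φ := by
      intro v hv; rw [LinearMap.mem_ker] at *; rw [hb', hv, mul_zero]
    have hy : ∃ y, φ y ≠ 0 := by
      by_contra! hh
      exact hφ (LinearMap.ext hh)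
    obtain ⟨y, hy⟩ := hy
    have hker : Module.finrank ℂ (LinearMap.ker φ) = n := by
      have h1 := φ.finrank_range_add_finrank_ker
      have h2 : LinearMap.range φ = ⊤ := LinearMap.range_eq_top.2 (LinearMap.surjective hφ)
      rw [h2, finrank_top, Module.finrank_self] at h1
      omega
    obtain ⟨b, hbb⟩ := ih (LinearMap.ker φ) hker (f.restrict hf) (g.restrict hg) (by
      ext v
      exact LinearMap.congr_fun h.eq v.1)
    have hli : ∀ (c : ℂ), ∀ x ∈ LinearMap.ker φ, c • y + x = 0 → c = 0 := by
      intro c x hx h0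
      have := congrArg φ h0
      rw [LinearMap.mem_ker] at hx
      simpa [hx, hy] using this
    have hsp : ∀ z : V, ∃ c : ℂ, z + c • y ∈ LinearMap.ker φ := by
      intro z
      refine ⟨-(φ z / φ y), ?_⟩
      rw [LinearMap.mem_ker]
      simp [hy]
    let B := Module.Basis.mkFinCons y b hli hsp
    have hB0 : B 0 = y := by simp [B]
    have hBs : ∀ i, B (Fin.succ i) = (b i : V) := by intro i; simp [B]
    have key : ∀ w : LinearMap.ker φ, B.repr (w : V) 0 = 0 ∧
        ∀ i, B.repr (w : V) (Fin.succ i) = b.repr w i := by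
      intro w
      have hw : (w : V) = ∑ i, b.repr w i • B (Fin.succ i) := by
        have := congrArg Subtype.val (b.sum_repr w)
        rw [AddSubmonoidClass.coe_finsetSum] at this
        simp only [hBs]
        exact this.symm
      have : B.repr (w : V) = ∑ i, b.repr w i • Finsupp.single (Fin.succ i) (1:ℂ) := by
        conv_lhs => rw [hw]
        simp
      rw [this]
      constructor
      · simp [Finsupp.finsetSum_apply]
      · intro i
        simp [Finsupp.finsetSum_apply, Finsupp.single_apply]
    refine ⟨B, ?_⟩
    intro i j hij
    obtain ⟨j, rfl⟩ := Fin.exists_succ_eq.2 (Fin.ne_zero_of_lt hij)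
    rw [hBs]
    have kf := key (f.restrict hf (b j))
    have kg := key (g.restrict hg (b j))
    simp only [LinearMap.coe_restrict_apply] at kf kg
    induction i using Fin.cases with
    | zero => exact ⟨kf.1, kg.1⟩
    | succ i =>
      rw [kf.2, kg.2]
      exact hbb i j (Fin.succ_lt_succ_iff.1 hij)

lemma triang_mat (r : ℕ) (a b : Matrix (Fin r) (Fin r) ℂ) (h : a * b = b * a) :
    ∃ g : GL (Fin r) ℂ, ∀ i j, i < j → (g.val * a * g⁻¹.val) i j = 0 ∧
      (g.val * b * g⁻¹.val) i j = 0 := by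
  obtain ⟨B, hB⟩ := triang r (Fin r → ℂ) (by simp) (Matrix.toLin' a) (Matrix.toLin' b) (by
    rw [commute_iff_eq, Module.End.mul_eq_comp, Module.End.mul_eq_comp,
      ← Matrix.toLin'_mul, ← Matrix.toLin'_mul, h])
  let c := Pi.basisFun ℂ (Fin r)
  let g : GL (Fin r) ℂ := ⟨B.toMatrix c, c.toMatrix B, B.toMatrix_mul_toMatrix_flip c,
    c.toMatrix_mul_toMatrix_flip B⟩
  have key : ∀ m : Matrix (Fin r) (Fin r) ℂ,
      g.val * m * g⁻¹.val = LinearMap.toMatrix B B (Matrix.toLin' m) := by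
    intro m
    rw [← basis_toMatrix_mul_linearMap_toMatrix_mul_basis_toMatrix B c B c]
    have : LinearMap.toMatrix c c (Matrix.toLin' m) = m := by
      exact LinearMap.toMatrix'_toLin' m
    rw [this]
    rfl
  refine ⟨g, fun i j hij => ?_⟩
  rw [key, key, LinearMap.toMatrix_apply, LinearMap.toMatrix_apply]
  exact hB i j hij

lemma orbit_trans {r : ℕ} {a b c d x y : Matrix (Fin r) (Fin r) ℂ}
    (h : (c, d) ∈ conjOrbit r a b) (h' : (x, y) ∈ conjOrbit r c d) :
    (x, y) ∈ conjOrbit r a b := by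
  obtain ⟨g, hg⟩ := h
  obtain ⟨k, hk⟩ := h'
  simp only [Prod.mk.injEq] at hg hk
  refine ⟨k * g, ?_⟩
  rw [hk.1, hk.2, hg.1, hg.2]
  simp [mul_assoc]

lemma orbit_symm {r : ℕ} {a b c d : Matrix (Fin r) (Fin r) ℂ}
    (h : (c, d) ∈ conjOrbit r a b) : (a, b) ∈ conjOrbit r c d := by
  obtain ⟨g, hg⟩ := h
  simp only [Prod.mk.injEq] at hg
  refine ⟨g⁻¹, ?_⟩
  have h1 : (g⁻¹).val * g.val = 1 := by rw [← Units.val_mul]; simp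
  have : ∀ m : Matrix (Fin r) (Fin r) ℂ,
      g⁻¹.val * (g.val * m * g⁻¹.val) * g⁻¹⁻¹.val = m := by
    intro m
    rw [inv_inv, mul_assoc, mul_assoc, h1, mul_one, ← mul_assoc, h1, one_mul]
  rw [hg.1, hg.2, this, this]

lemma orbit_eq {r : ℕ} {a b c d : Matrix (Fin r) (Fin r) ℂ}
    (h : (c, d) ∈ conjOrbit r a b) : conjOrbit r c d = conjOrbit r a b := by
  ext ⟨x, y⟩
  exact ⟨orbit_trans h, orbit_trans (orbit_symm h)⟩

/-- The contraction of a lower triangular matrix. -/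
def contr {r : ℕ} (T : Matrix (Fin r) (Fin r) ℂ) (t : ℂ) : Matrix (Fin r) (Fin r) ℂ :=
  Matrix.of fun i j => t ^ (i.val - j.val) * T i j

lemma contr_cont {r : ℕ} (T : Matrix (Fin r) (Fin r) ℂ) : Continuous (contr T) := by
  unfold contr
  refine continuous_matrix fun i j => ?_
  simp only [Matrix.of_apply]
  fun_prop

lemma contr_zero {r : ℕ} (T : Matrix (Fin r) (Fin r) ℂ) (h : ∀ i j, i < j → T i j = 0) :
    contr T 0 = Matrix.diagonal (fun i => T i i) := by
  ext i j
  rcases lt_trichotomy i j with hij | hij | hij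
  · simp [contr, h i j hij, hij.ne]
  · subst hij; simp [contr]
  · have : i.val - j.val ≠ 0 := by have : j.val < i.val := hij; omega
    simp [contr, hij.ne', this]

lemma contr_conj {r : ℕ} (T : Matrix (Fin r) (Fin r) ℂ) (h : ∀ i j, i < j → T i j = 0)
    (t : ℂ) (ht : t ≠ 0) :
    contr T t = Matrix.diagonal (fun i : Fin r => t ^ i.val) * T *
      Matrix.diagonal (fun i : Fin r => (t ^ i.val)⁻¹) := by
  ext i j
  rw [Matrix.mul_diagonal, Matrix.diagonal_mul]
  rcases lt_or_ge i j with hij | hij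
  · simp [contr, h i j hij]
  · have : j.val ≤ i.val := hij
    simp only [contr, Matrix.of_apply]
    rw [pow_sub₀ t ht this]
    ring

lemma diag_mem {r : ℕ} (a b : Matrix (Fin r) (Fin r) ℂ) (h : a * b = b * a)
    (hcl : IsClosed (conjOrbit r a b)) :
    ∃ d e : Fin r → ℂ, (Matrix.diagonal d, Matrix.diagonal e) ∈ conjOrbit r a b := by
  obtain ⟨g, hg⟩ := triang_mat r a b h
  set S := g.val * a * g⁻¹.val with hS
  set T := g.val * b * g⁻¹.val with hT
  have hST : (S, T) ∈ conjOrbit r a b := ⟨g, rfl⟩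
  have h1 : ∀ i j, i < j → S i j = 0 := fun i j hij => (hg i j hij).1
  have h2 : ∀ i j, i < j → T i j = 0 := fun i j hij => (hg i j hij).2
  refine ⟨fun i => S i i, fun i => T i i, ?_⟩
  rw [← contr_zero S h1, ← contr_zero T h2]
  let F : ℂ → Matrix (Fin r) (Fin r) ℂ × Matrix (Fin r) (Fin r) ℂ := fun t => (contr S t, contr T t)
  have hF : Continuous F := (contr_cont S).prodMk (contr_cont T)
  have hpre : IsClosed (F ⁻¹' conjOrbit r a b) := hcl.preimage hF
  have hsub : ({0}ᶜ : Set ℂ) ⊆ F ⁻¹' conjOrbit r a b := by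
    intro t ht
    have ht : t ≠ 0 := ht
    refine orbit_trans hST ?_
    refine ⟨⟨Matrix.diagonal (fun i : Fin r => t ^ i.val),
      Matrix.diagonal (fun i : Fin r => (t ^ i.val)⁻¹), ?_, ?_⟩, ?_⟩
    · simp [ht]
    · simp [ht]
    · rw [contr_conj S h1 t ht, contr_conj T h2 t ht]
      rfl
  have : closure ({0}ᶜ : Set ℂ) ⊆ F ⁻¹' conjOrbit r a b := hpre.closure_subset_iff.2 hsub
  rw [(dense_compl_singleton (0:ℂ)).closure_eq] at this
  exact this (Set.mem_univ 0)

lemma closure_comm {r : ℕ} {a b c d : Matrix (Fin r) (Fin r) ℂ} (h : a * b = b * a)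
    (hm : (c, d) ∈ closure (conjOrbit r a b)) : c * d = d * c := by
  have hcl : IsClosed {p : Matrix (Fin r) (Fin r) ℂ × Matrix (Fin r) (Fin r) ℂ |
      p.1 * p.2 = p.2 * p.1} := isClosed_eq (by fun_prop) (by fun_prop)
  refine hcl.closure_subset_iff.2 ?_ hm
  rintro _ ⟨g, rfl⟩
  have h1 : (g⁻¹).val * g.val = 1 := by rw [← Units.val_mul]; simp
  have : ∀ m n : Matrix (Fin r) (Fin r) ℂ,
      (g.val * m * g⁻¹.val) * (g.val * n * g⁻¹.val) = g.val * (m * n) * g⁻¹.val := by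
    intro m n
    calc _ = g.val * m * (g⁻¹.val * g.val) * n * g⁻¹.val := by simp only [mul_assoc]
      _ = _ := by rw [h1]; simp only [mul_assoc, mul_one]
  simp only [Set.mem_ofPred_eq, this, h]

lemma closure_charpoly {r : ℕ} {a b c d : Matrix (Fin r) (Fin r) ℂ}
    (hm : (c, d) ∈ closure (conjOrbit r a b)) (s : ℂ) :
    (c + s • d).charpoly = (a + s • b).charpoly := by
  apply Polynomial.funext
  intro x
  rw [Matrix.eval_charpoly, Matrix.eval_charpoly]
  have hcl : IsClosed {p : Matrix (Fin r) (Fin r) ℂ × Matrix (Fin r) (Fin r) ℂ |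
      (Matrix.scalar (Fin r) x - (p.1 + s • p.2)).det =
        (Matrix.scalar (Fin r) x - (a + s • b)).det} :=
    isClosed_eq (Continuous.matrix_det (by fun_prop)) continuous_const
  suffices hh : conjOrbit r a b ⊆ {p : Matrix (Fin r) (Fin r) ℂ × Matrix (Fin r) (Fin r) ℂ |
      (Matrix.scalar (Fin r) x - (p.1 + s • p.2)).det =
        (Matrix.scalar (Fin r) x - (a + s • b)).det} by
    have := closure_minimal hh hcl hm
    rwa [Set.mem_ofPred_eq] at this
  rintro _ ⟨g, rfl⟩
  simp only [Set.mem_ofPred_eq]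
  rw [← Matrix.eval_charpoly, ← Matrix.eval_charpoly]
  have : g.val * a * g⁻¹.val + s • (g.val * b * g⁻¹.val) = g.val * (a + s • b) * g⁻¹.val := by
    simp [mul_add, add_mul]
  rw [this, Matrix.coe_units_inv, Matrix.charpoly_units_conj g]

lemma exists_perm {r : ℕ} (u v : Fin r → ℂ)
    (h : (Matrix.diagonal u).charpoly = (Matrix.diagonal v).charpoly) :
    ∃ σ : Equiv.Perm (Fin r), ∀ i, v (σ i) = u i := by
  classical
  have hr : Finset.univ.val.map u = Finset.univ.val.map v := by
    have := congrArg Polynomial.roots h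
    rw [Matrix.charpoly_diagonal, Matrix.charpoly_diagonal] at this
    have e : ∀ w : Fin r → ℂ, (∏ i, (Polynomial.X - Polynomial.C (w i))).roots
        = Finset.univ.val.map w := by
      intro w
      exact Polynomial.roots_multiset_prod_X_sub_C (Finset.univ.val.map w) ▸ by
        simp [Finset.prod, Multiset.map_map, Function.comp_def]
    rwa [e, e] at this
  have hc : ∀ z : ℂ, Nonempty ({i // u i = z} ≃ {i // v i = z}) := by
    intro z
    have := congrArg (Multiset.count z) hr
    rw [Multiset.count_map, Multiset.count_map] at this
    refine ⟨Fintype.equivOfCardEq ?_⟩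
    rw [Fintype.card_subtype, Fintype.card_subtype]
    simp only [eq_comm (a := z)] at this
    exact this
  refine ⟨Equiv.ofFiberEquiv (fun z => (hc z).some), fun i => ?_⟩
  exact Equiv.ofFiberEquiv_map _ i

/-- The closure of the `GL r ℂ`-orbit of a commuting pair of matrices contains a
unique closed orbit: any two closed orbits contained in this closure coincide. -/
theorem stmt2 (r : ℕ) (hr : 1 ≤ r) (m₁ m₂ : Matrix (Fin r) (Fin r) ℂ)
    (hcomm : m₁ * m₂ = m₂ * m₁) (n₁ n₂ n₁' n₂' : Matrix (Fin r) (Fin r) ℂ)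
    (hsub₁ : conjOrbit r n₁ n₂ ⊆ closure (conjOrbit r m₁ m₂))
    (hsub₂ : conjOrbit r n₁' n₂' ⊆ closure (conjOrbit r m₁ m₂))
    (hcl₁ : IsClosed (conjOrbit r n₁ n₂)) (hcl₂ : IsClosed (conjOrbit r n₁' n₂')) :
    conjOrbit r n₁ n₂ = conjOrbit r n₁' n₂' := by
  have self : ∀ a b : Matrix (Fin r) (Fin r) ℂ, (a, b) ∈ conjOrbit r a b :=
    fun a b => ⟨1, by simp⟩
  obtain ⟨d, e, hde⟩ := diag_mem n₁ n₂ (closure_comm hcomm (hsub₁ (self _ _))) hcl₁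
  obtain ⟨d', e', hde'⟩ := diag_mem n₁' n₂' (closure_comm hcomm (hsub₂ (self _ _))) hcl₂
  rw [← orbit_eq hde, ← orbit_eq hde']
  obtain ⟨s, hs⟩ := Set.Infinite.exists_notMem_finset (Set.infinite_univ (α := ℂ))
    (Finset.univ.image fun p : Fin r × Fin r => (d p.1 - d' p.2) / (e' p.2 - e p.1))
  have hs := hs.2
  have hch := (closure_charpoly (hsub₁ hde) s).trans (closure_charpoly (hsub₂ hde') s).symm
  rw [← Matrix.diagonal_smul, ← Matrix.diagonal_smul, Matrix.diagonal_add,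
    Matrix.diagonal_add] at hch
  obtain ⟨σ, hσ⟩ := exists_perm _ _ hch
  have hσ' : ∀ i, e i = e' (σ i) ∧ d i = d' (σ i) := by
    intro i
    have h1 := hσ i
    simp only [Pi.smul_apply, smul_eq_mul] at h1
    have h2 : e i = e' (σ i) := by
      by_contra hne
      apply hs
      rw [Finset.mem_image]
      refine ⟨(i, σ i), Finset.mem_univ _, ?_⟩
      have : e' (σ i) - e i ≠ 0 := sub_ne_zero.2 (Ne.symm hne)
      rw [div_eq_iff this]
      linear_combination -h1
    refine ⟨h2, ?_⟩
    rw [h2] at h1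
    exact (add_right_cancel h1).symm
  apply orbit_eq
  have hp : ∀ τ : Equiv.Perm (Fin r), (τ.permMatrix ℂ) * (τ⁻¹.permMatrix ℂ) = 1 := by
    intro τ
    rw [← Matrix.permMatrix_mul]; simp
  refine ⟨⟨σ.permMatrix ℂ, σ⁻¹.permMatrix ℂ, hp σ, by simpa using hp σ⁻¹⟩, ?_⟩
  have key : ∀ w w' : Fin r → ℂ, (∀ i, w i = w' (σ i)) →
      Matrix.diagonal w = σ.permMatrix ℂ * Matrix.diagonal w' * σ⁻¹.permMatrix ℂ := by
    intro w w' hw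
    have : σ.permMatrix ℂ * Matrix.diagonal w' = Matrix.diagonal w * σ.permMatrix ℂ := by
      ext i j
      rw [Matrix.mul_diagonal, Matrix.diagonal_mul, hw]
      simp only [Equiv.Perm.permMatrix, PEquiv.toMatrix_apply, Equiv.toPEquiv_apply,
        Option.mem_some_iff]
      split_ifs with hij
      · rw [hij]; ring
      · ring
    rw [this, mul_assoc, hp, mul_one]
  exact Prod.ext (key d d' fun i => (hσ' i).2) (key e e' fun i => (hσ' i).1)
end

section
/- Let r ≥ 1 and let (m₁, m₂) be a commuting pair of r×r complex matrices. Suppose g, h ∈ GL_r(ℂ) are such that g m₁ g⁻¹, g m₂ g⁻¹, h m₁ h⁻¹ and h m₂ h⁻¹ are all upper triangular. Then the multiset of diagonal pairs {((g m₁ g⁻¹)_{jj}, (g m₂ g⁻¹)_{jj}) : j ∈ Fin r} equals the multiset {((h m₁ h⁻¹)_{jj}, (h m₂ h⁻¹)_{jj}) : j ∈ Fin r} in Multiset (ℂ × ℂ). That is, the joint spectrum of a commuting pair is independent of the chosen simultaneous triangularization. -/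
open Matrix

/-- The multiset of pairs of diagonal entries of a pair of `r × r` complex matrices. -/
def diagPairs (r : ℕ) (A B : Matrix (Fin r) (Fin r) ℂ) : Multiset (ℂ × ℂ) :=
  (Finset.univ : Finset (Fin r)).val.map fun j => (A j j, B j j)

open Polynomial in
theorem aux_roots (r : ℕ) (m₁ m₂ : Matrix (Fin r) (Fin r) ℂ) (g : GL (Fin r) ℂ) (t : ℂ)
    (hg₁ : ∀ i j : Fin r, j < i → (g.val * m₁ * g⁻¹.val) i j = 0)
    (hg₂ : ∀ i j : Fin r, j < i → (g.val * m₂ * g⁻¹.val) i j = 0) :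
    (diagPairs r (g.val * m₁ * g⁻¹.val) (g.val * m₂ * g⁻¹.val)).map (fun p => p.1 + t * p.2)
      = (m₁ + t • m₂).charpoly.roots := by
  have e : g.val * (m₁ + t • m₂) * g⁻¹.val
      = g.val * m₁ * g⁻¹.val + t • (g.val * m₂ * g⁻¹.val) := by
    simp [Matrix.mul_add, Matrix.add_mul]
  rw [← Matrix.charpoly_units_conj g, ← Matrix.coe_units_inv, e, Matrix.charpoly_of_isUpperTriangular]
  · rw [Polynomial.roots_prod _ _ (Finset.prod_ne_zero_iff.2 fun i _ => X_sub_C_ne_zero _)]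
    simp only [Polynomial.roots_X_sub_C, Multiset.bind_singleton, diagPairs, Multiset.map_map]
    rfl
  · intro i j hij
    have hij' : j < i := hij
    rw [Matrix.add_apply, Matrix.smul_apply, hg₁ i j hij', hg₂ i j hij']
    simp

theorem aux_inj (S : Finset (ℂ × ℂ)) :
    ∃ t : ℂ, Set.InjOn (fun p : ℂ × ℂ => p.1 + t * p.2) (S : Set (ℂ × ℂ)) := by
  classical
  obtain ⟨t, ht⟩ := Infinite.exists_notMem_finset
    ((S ×ˢ S).image fun q : (ℂ × ℂ) × (ℂ × ℂ) => (q.1.1 - q.2.1) / (q.2.2 - q.1.2))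
  refine ⟨t, fun p hp q hq hpq => ?_⟩
  have hpq' : p.1 + t * p.2 = q.1 + t * q.2 := hpq
  by_cases hb : p.2 = q.2
  · refine Prod.ext ?_ hb
    rw [hb] at hpq'
    exact add_right_cancel hpq'
  · exfalso
    apply ht
    refine Finset.mem_image.2 ⟨(p, q), Finset.mem_product.2 ⟨hp, hq⟩, ?_⟩
    have : q.2 - p.2 ≠ 0 := sub_ne_zero.2 (Ne.symm hb)
    rw [div_eq_iff this]
    linear_combination hpq'

theorem aux_map (s u : Multiset (ℂ × ℂ))
    (H : ∀ t : ℂ, s.map (fun p => p.1 + t * p.2) = u.map (fun p => p.1 + t * p.2)) :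
    s = u := by
  classical
  obtain ⟨t, ht⟩ := aux_inj (s.toFinset ∪ u.toFinset)
  have hl := ht.leftInvOn_invFunOn
  have key : ∀ v : Multiset (ℂ × ℂ), (∀ p ∈ v, p ∈ s.toFinset ∪ u.toFinset) →
      (v.map (fun p => p.1 + t * p.2)).map
        (Function.invFunOn (fun p : ℂ × ℂ => p.1 + t * p.2)
          ((s.toFinset ∪ u.toFinset : Finset (ℂ × ℂ)) : Set (ℂ × ℂ))) = v := by
    intro v hv
    rw [Multiset.map_map]
    conv_rhs => rw [← Multiset.map_id v]
    exact Multiset.map_congr rfl fun p hp => hl (hv p hp)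
  have h1 := key s (by simp +contextual)
  rw [H t, key u (by simp +contextual)] at h1
  exact h1.symm

/-- The joint spectrum of a commuting pair of matrices is independent of the chosen
simultaneous triangularization: any two simultaneous upper-triangularizations of the pair
have the same multiset of diagonal pairs. -/
theorem stmt4 (r : ℕ) (hr : 1 ≤ r) (m₁ m₂ : Matrix (Fin r) (Fin r) ℂ)
    (hcomm : m₁ * m₂ = m₂ * m₁) (g h : GL (Fin r) ℂ)
    (hg₁ : ∀ i j : Fin r, j < i → (g.val * m₁ * g⁻¹.val) i j = 0)
    (hg₂ : ∀ i j : Fin r, j < i → (g.val * m₂ * g⁻¹.val) i j = 0)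
    (hh₁ : ∀ i j : Fin r, j < i → (h.val * m₁ * h⁻¹.val) i j = 0)
    (hh₂ : ∀ i j : Fin r, j < i → (h.val * m₂ * h⁻¹.val) i j = 0) :
    diagPairs r (g.val * m₁ * g⁻¹.val) (g.val * m₂ * g⁻¹.val) =
      diagPairs r (h.val * m₁ * h⁻¹.val) (h.val * m₂ * h⁻¹.val) := by
  exact aux_map _ _ fun t => by
    rw [aux_roots r m₁ m₂ g t hg₁ hg₂, aux_roots r m₁ m₂ h t hh₁ hh₂]
end

section
/- Let r ≥ 1 and let d₁, d₂, d₁′, d₂′ be diagonal r×r complex matrices. There exists g ∈ GL_r(ℂ) with g d₁ g⁻¹ = d₁′ and g d₂ g⁻¹ = d₂′ if and only if there exists a permutation σ of Fin r such that (d₁′)_{jj} = (d₁)_{σ(j)σ(j)} and (d₂′)_{jj} = (d₂)_{σ(j)σ(j)} for all j. Consequently, GL_r(ℂ)-orbits of pairs of diagonal matrices under simultaneous conjugation are classified by multisets of r pairs of complex numbers. -/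
open Matrix

lemma conj_iff_perm (r : ℕ) (d₁ d₂ d₁' d₂' : Matrix (Fin r) (Fin r) ℂ)
    (h₁ : d₁.IsDiag) (h₂ : d₂.IsDiag) (h₁' : d₁'.IsDiag) (h₂' : d₂'.IsDiag) :
    (∃ g : GL (Fin r) ℂ, g.val * d₁ * g⁻¹.val = d₁' ∧ g.val * d₂ * g⁻¹.val = d₂') ↔
      ∃ σ : Equiv.Perm (Fin r),
        ∀ j : Fin r, d₁' j j = d₁ (σ j) (σ j) ∧ d₂' j j = d₂ (σ j) (σ j) := by
  have key : ∀ (g : GL (Fin r) ℂ) (d d' : Matrix (Fin r) (Fin r) ℂ), d.IsDiag → d'.IsDiag →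
      (g.val * d * g⁻¹.val = d' ↔ ∀ i j, g.val i j * d j j = d' i i * g.val i j) := by
    intro g d d' h h'
    rw [Units.mul_inv_eq_iff_eq_mul, ← h.diagonal_diag, ← h'.diagonal_diag, ← Matrix.ext_iff]
    simp [Matrix.mul_diagonal, Matrix.diagonal_mul]
  constructor
  · rintro ⟨g, e₁, e₂⟩
    rw [key g _ _ h₁ h₁'] at e₁
    rw [key g _ _ h₂ h₂'] at e₂
    have hdet : (g.val)ᵀ.det ≠ 0 := by
      rw [Matrix.det_transpose]
      exact ((Matrix.isUnit_iff_isUnit_det _).1 g.isUnit).ne_zero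
    rw [Matrix.det_apply] at hdet
    obtain ⟨σ, -, hσ⟩ := Finset.exists_ne_zero_of_sum_ne_zero hdet
    have hp : ∏ i, (g.val)ᵀ (σ i) i ≠ 0 := fun h => hσ (by rw [h, smul_zero])
    rw [Finset.prod_ne_zero_iff] at hp
    refine ⟨σ, fun j => ?_⟩
    have hj : g.val j (σ j) ≠ 0 := hp j (Finset.mem_univ j)
    exact ⟨mul_right_cancel₀ hj (by rw [← e₁, mul_comm]),
      mul_right_cancel₀ hj (by rw [← e₂, mul_comm])⟩
  · rintro ⟨σ, hσ⟩
    have hu : IsUnit (σ.permMatrix ℂ) := by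
      rw [Matrix.isUnit_iff_isUnit_det, Matrix.det_permutation]
      exact ((Equiv.Perm.sign σ).isUnit.map (Int.castRingHom ℂ))
    refine ⟨hu.unit, (key _ _ _ h₁ h₁').2 ?_, (key _ _ _ h₂ h₂').2 ?_⟩ <;>
    · intro i j
      by_cases h : σ i = j
      · subst h
        simp [(hσ i).1, (hσ i).2, mul_comm]
      · simp [Equiv.Perm.permMatrix, PEquiv.toMatrix_apply, h]

lemma perm_iff_diagPairs (r : ℕ) (d₁ d₂ d₁' d₂' : Matrix (Fin r) (Fin r) ℂ) :
    (∃ σ : Equiv.Perm (Fin r),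
        ∀ j : Fin r, d₁' j j = d₁ (σ j) (σ j) ∧ d₂' j j = d₂ (σ j) (σ j)) ↔
      diagPairs r d₁ d₂ = diagPairs r d₁' d₂' := by
  classical
  unfold diagPairs
  constructor
  · rintro ⟨σ, hσ⟩
    have h : (fun j => (d₁' j j, d₂' j j)) = (fun j => (d₁ j j, d₂ j j)) ∘ σ := by
      funext j
      exact Prod.ext (hσ j).1 (hσ j).2
    rw [h, ← Multiset.map_map, Multiset.map_univ_val_equiv]
  · intro h
    have e : ∀ c : ℂ × ℂ, Nonempty ({j : Fin r // (d₁' j j, d₂' j j) = c} ≃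
        {j : Fin r // (d₁ j j, d₂ j j) = c}) := by
      intro c
      rw [← Fintype.card_eq, Fintype.card_subtype, Fintype.card_subtype]
      have hc := congrArg (Multiset.count c) h
      rw [Multiset.count_map, Multiset.count_map] at hc
      simp only [Finset.card, Finset.filter_val, eq_comm (b := c)]
      exact hc.symm
    let E := Equiv.ofFiberEquiv fun c => (e c).some
    refine ⟨E, fun j => ?_⟩
    have hj := Equiv.ofFiberEquiv_map (fun c => (e c).some) j
    exact ⟨(congrArg Prod.fst hj).symm, (congrArg Prod.snd hj).symm⟩

/-- Two pairs of diagonal matrices are simultaneously conjugate under `GL r ℂ` iff their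
diagonal pairs differ by a permutation; consequently, `GL r ℂ`-orbits of pairs of diagonal
matrices are classified by the multiset of the `r` pairs of diagonal entries. -/
theorem stmt5 (r : ℕ) (hr : 1 ≤ r) (d₁ d₂ d₁' d₂' : Matrix (Fin r) (Fin r) ℂ)
    (h₁ : d₁.IsDiag) (h₂ : d₂.IsDiag) (h₁' : d₁'.IsDiag) (h₂' : d₂'.IsDiag) :
    ((∃ g : GL (Fin r) ℂ, g.val * d₁ * g⁻¹.val = d₁' ∧ g.val * d₂ * g⁻¹.val = d₂') ↔
      ∃ σ : Equiv.Perm (Fin r),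
        ∀ j : Fin r, d₁' j j = d₁ (σ j) (σ j) ∧ d₂' j j = d₂ (σ j) (σ j)) ∧
    ((∃ g : GL (Fin r) ℂ, g.val * d₁ * g⁻¹.val = d₁' ∧ g.val * d₂ * g⁻¹.val = d₂') ↔
      diagPairs r d₁ d₂ = diagPairs r d₁' d₂') := by
  have h := conj_iff_perm r d₁ d₂ d₁' d₂' h₁ h₂ h₁' h₂'
  exact ⟨h, h.trans (perm_iff_diagPairs r d₁ d₂ d₁' d₂')⟩
end

section
/- Let r ≥ 1 and let (m₁, m₂) and (n₁, n₂) be commuting pairs of r×r complex matrices. Suppose g, h ∈ GL_r(ℂ) are such that g m₁ g⁻¹, g m₂ g⁻¹ are upper triangular and h n₁ h⁻¹, h n₂ h⁻¹ are upper triangular. Then the topological closures of the GL_r(ℂ)-orbits of (m₁, m₂) and of (n₁, n₂) have nonempty intersection if and only if the multiset {((g m₁ g⁻¹)_{jj}, (g m₂ g⁻¹)_{jj}) : j ∈ Fin r} equals the multiset {((h n₁ h⁻¹)_{jj}, (h n₂ h⁻¹)_{jj}) : j ∈ Fin r}. Thus the points of the categorical quotient of the commuting variety, i.e. the equivalence classes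 of commuting pairs under the relation "orbit closures intersect", are classified by multisets of r points of ℂ², realizing the symmetric product S^r(ℂ²). -/
open Matrix

theorem conjOrbit_closure_conj {r : ℕ} {m₁ m₂ : Matrix (Fin r) (Fin r) ℂ}
    (g : GL (Fin r) ℂ) {p : Matrix (Fin r) (Fin r) ℂ × Matrix (Fin r) (Fin r) ℂ}
    (hp : p ∈ closure (conjOrbit r m₁ m₂)) :
    (g.val * p.1 * g⁻¹.val, g.val * p.2 * g⁻¹.val) ∈ closure (conjOrbit r m₁ m₂) := by
  have hc : Continuous (fun p : Matrix (Fin r) (Fin r) ℂ × Matrix (Fin r) (Fin r) ℂ =>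
      (g.val * p.1 * g⁻¹.val, g.val * p.2 * g⁻¹.val)) := by fun_prop
  have key := map_mem_closure (t := conjOrbit r m₁ m₂) hc hp
  refine key ?_
  rintro _ ⟨k, rfl⟩
  refine ⟨g * k, ?_⟩
  simp [mul_assoc]

theorem diag_mem_closure {r : ℕ} {m₁ m₂ : Matrix (Fin r) (Fin r) ℂ} (g : GL (Fin r) ℂ)
    (hg₁ : ∀ i j : Fin r, j < i → (g.val * m₁ * g⁻¹.val) i j = 0)
    (hg₂ : ∀ i j : Fin r, j < i → (g.val * m₂ * g⁻¹.val) i j = 0) :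
    (diagonal (fun i => (g.val * m₁ * g⁻¹.val) i i),
      diagonal (fun i => (g.val * m₂ * g⁻¹.val) i i)) ∈ closure (conjOrbit r m₁ m₂) := by
  let F : Matrix (Fin r) (Fin r) ℂ → ℂ → Matrix (Fin r) (Fin r) ℂ :=
    fun A t => Matrix.of fun i j => t ^ (j.val - i.val) * A i j
  have hF : ∀ A, Continuous (F A) := by
    intro A
    refine continuous_matrix fun i j => ?_
    simp only [F, Matrix.of_apply]
    fun_prop
  have hF0 : ∀ A : Matrix (Fin r) (Fin r) ℂ, (∀ i j : Fin r, j < i → A i j = 0) →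
      F A 0 = diagonal (fun i => A i i) := by
    intro A hA
    ext i j
    simp only [F, Matrix.of_apply]
    rcases lt_trichotomy i j with h | h | h
    · have : j.val - i.val ≠ 0 := by have : i.val < j.val := h
                                     omega
      simp [this, diagonal_apply_ne _ h.ne]
    · subst h; simp
    · simp [hA i j h, diagonal_apply_ne _ h.ne']
  have hF1 : ∀ A : Matrix (Fin r) (Fin r) ℂ, (∀ i j : Fin r, j < i → A i j = 0) →
      ∀ t : ℂ, t ≠ 0 →
      diagonal (fun i : Fin r => (t ^ i.val)⁻¹) * A * diagonal (fun i : Fin r => t ^ i.val)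
        = F A t := by
    intro A hA t ht
    ext i j
    rw [mul_diagonal, diagonal_mul]
    simp only [F, Matrix.of_apply]
    rcases lt_or_ge j i with h | h
    · simp [hA i j h]
    · rw [pow_sub₀ _ ht (by exact h)]; ring
  have h0 : (0 : ℂ) ∈ closure ({0}ᶜ : Set ℂ) := by simp
  have := map_mem_closure (f := fun t => (F (g.val * m₁ * g⁻¹.val) t, F (g.val * m₂ * g⁻¹.val) t))
    (t := conjOrbit r m₁ m₂) ((hF _).prodMk (hF _)) h0 ?_
  · simpa only [hF0 _ hg₁, hF0 _ hg₂] using this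
  · intro t ht
    have ht : t ≠ 0 := ht
    let D : GL (Fin r) ℂ := ⟨diagonal (fun i : Fin r => (t ^ i.val)⁻¹),
      diagonal (fun i : Fin r => t ^ i.val), by simp [diagonal_mul_diagonal, ht],
      by simp [diagonal_mul_diagonal, ht]⟩
    refine ⟨D * g, ?_⟩
    beta_reduce
    rw [← hF1 _ hg₁ t ht, ← hF1 _ hg₂ t ht]
    have e1 : D.val = diagonal (fun i : Fin r => (t ^ i.val)⁻¹) := rfl
    have e2 : D⁻¹.val = diagonal (fun i : Fin r => t ^ i.val) := rfl
    rw [← e1, ← e2]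
    simp [mul_assoc]

theorem charpoly_closure {r : ℕ} {m₁ m₂ : Matrix (Fin r) (Fin r) ℂ} (g : GL (Fin r) ℂ) (c : ℂ)
    {p : Matrix (Fin r) (Fin r) ℂ × Matrix (Fin r) (Fin r) ℂ}
    (hp : p ∈ closure (conjOrbit r m₁ m₂)) :
    (p.1 + c • p.2).charpoly =
      (g.val * m₁ * g⁻¹.val + c • (g.val * m₂ * g⁻¹.val)).charpoly := by
  have key : ∀ k : GL (Fin r) ℂ, (k.val * m₁ * k⁻¹.val + c • (k.val * m₂ * k⁻¹.val)).charpoly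
      = (m₁ + c • m₂).charpoly := by
    intro k
    rw [← Matrix.charpoly_units_conj k (m₁ + c • m₂)]
    congr 1
    simp [mul_add, add_mul]
  rw [key]
  refine Polynomial.funext fun z => ?_
  have hc : Continuous (fun p : Matrix (Fin r) (Fin r) ℂ × Matrix (Fin r) (Fin r) ℂ =>
      (p.1 + c • p.2).charpoly.eval z) := by
    simp only [Matrix.eval_charpoly]
    fun_prop
  have hcl : IsClosed {p : Matrix (Fin r) (Fin r) ℂ × Matrix (Fin r) (Fin r) ℂ |
      (p.1 + c • p.2).charpoly.eval z = (m₁ + c • m₂).charpoly.eval z} :=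
    isClosed_eq hc continuous_const
  refine closure_minimal ?_ hcl hp
  rintro _ ⟨k, rfl⟩
  simp only [Set.mem_ofPred_eq]
  rw [key]

theorem roots_tri {r : ℕ} (A B : Matrix (Fin r) (Fin r) ℂ) (c : ℂ)
    (hA : ∀ i j : Fin r, j < i → A i j = 0) (hB : ∀ i j : Fin r, j < i → B i j = 0) :
    (A + c • B).charpoly.roots = (diagPairs r A B).map (fun p => p.1 + c * p.2) := by
  rw [Matrix.charpoly_of_isUpperTriangular]
  · rw [diagPairs, Multiset.map_map, ← Polynomial.roots_multiset_prod_X_sub_C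
      (Multiset.map _ (Finset.univ : Finset (Fin r)).val), Multiset.map_map]
    rfl
  · intro i j hij
    have hij : j < i := hij
    simp [hA i j hij, hB i j hij]

theorem exists_sep_s6 (s : Finset (ℂ × ℂ)) :
    ∃ c : ℂ, Set.InjOn (fun p : ℂ × ℂ => p.1 + c * p.2) s := by
  classical
  obtain ⟨c, hc⟩ := Infinite.exists_notMem_finset
    ((s ×ˢ s).image (fun q : (ℂ × ℂ) × (ℂ × ℂ) => -(q.1.1 - q.2.1) / (q.1.2 - q.2.2)))
  refine ⟨c, fun p hp q hq h => ?_⟩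
  simp only at h
  by_cases h2 : p.2 = q.2
  · exact Prod.ext (by rw [h2] at h; exact add_right_cancel h) h2
  · refine absurd (Finset.mem_image.2 ⟨(p, q), Finset.mem_product.2 ⟨hp, hq⟩, ?_⟩) hc
    have : p.2 - q.2 ≠ 0 := sub_ne_zero.2 h2
    simp only
    rw [div_eq_iff this]
    linear_combination -h

theorem multiset_eq_of_sep (S T : Multiset (ℂ × ℂ))
    (h : ∀ c : ℂ, S.map (fun p => p.1 + c * p.2) = T.map (fun p => p.1 + c * p.2)) : S = T := by
  classical
  obtain ⟨c, hc⟩ := exists_sep_s6 (S + T).toFinset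
  have hl := hc.leftInvOn_invFunOn
  have := congrArg (Multiset.map (Function.invFunOn (fun p : ℂ × ℂ => p.1 + c * p.2)
    ((S + T).toFinset : Set (ℂ × ℂ)))) (h c)
  rw [Multiset.map_map, Multiset.map_map] at this
  have hS : S.map (Function.invFunOn (fun p : ℂ × ℂ => p.1 + c * p.2)
      ((S + T).toFinset : Set (ℂ × ℂ)) ∘ fun p : ℂ × ℂ => p.1 + c * p.2) = S.map id :=
    Multiset.map_congr rfl (fun x hx => hl (by simp [hx]))
  have hT : T.map (Function.invFunOn (fun p : ℂ × ℂ => p.1 + c * p.2)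
      ((S + T).toFinset : Set (ℂ × ℂ)) ∘ fun p : ℂ × ℂ => p.1 + c * p.2) = T.map id :=
    Multiset.map_congr rfl (fun x hx => hl (by simp [hx]))
  rw [hS, hT] at this
  simpa using this

theorem exists_perm_of_map_eq {r : ℕ} {α : Type} (f f' : Fin r → α)
    (H : (Finset.univ : Finset (Fin r)).val.map f = (Finset.univ : Finset (Fin r)).val.map f') :
    ∃ σ : Equiv.Perm (Fin r), ∀ i, f i = f' (σ i) := by
  classical
  have hc : ∀ c, Nonempty ({a // f a = c} ≃ {b // f' b = c}) := by
    intro c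
    refine Fintype.card_eq.1 ?_
    have := congrArg (Multiset.count c) H
    rw [Multiset.count_map, Multiset.count_map] at this
    rw [Fintype.card_subtype, Fintype.card_subtype]
    simp only [eq_comm (a := c)] at this
    exact this
  exact ⟨Equiv.ofFiberEquiv fun c => (hc c).some, fun i => (Equiv.ofFiberEquiv_map _ i).symm⟩

/-- The orbit closures of two commuting pairs intersect iff the multisets of joint
eigenvalues (read off from any simultaneous triangularizations) agree: the categorical
quotient of the commuting variety is the symmetric product `Symᵣ(ℂ²)`. -/
theorem stmt6 (r : ℕ) (hr : 1 ≤ r) (m₁ m₂ n₁ n₂ : Matrix (Fin r) (Fin r) ℂ)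
    (hm : m₁ * m₂ = m₂ * m₁) (hn : n₁ * n₂ = n₂ * n₁) (g h : GL (Fin r) ℂ)
    (hg₁ : ∀ i j : Fin r, j < i → (g.val * m₁ * g⁻¹.val) i j = 0)
    (hg₂ : ∀ i j : Fin r, j < i → (g.val * m₂ * g⁻¹.val) i j = 0)
    (hh₁ : ∀ i j : Fin r, j < i → (h.val * n₁ * h⁻¹.val) i j = 0)
    (hh₂ : ∀ i j : Fin r, j < i → (h.val * n₂ * h⁻¹.val) i j = 0) :
    (closure (conjOrbit r m₁ m₂) ∩ closure (conjOrbit r n₁ n₂)).Nonempty ↔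
      diagPairs r (g.val * m₁ * g⁻¹.val) (g.val * m₂ * g⁻¹.val) =
        diagPairs r (h.val * n₁ * h⁻¹.val) (h.val * n₂ * h⁻¹.val) := by
  constructor
  · rintro ⟨p, hp, hq⟩
    refine multiset_eq_of_sep _ _ fun c => ?_
    rw [← roots_tri _ _ c hg₁ hg₂, ← roots_tri _ _ c hh₁ hh₂, ← charpoly_closure g c hp,
      ← charpoly_closure h c hq]
  · intro H
    have h1 := diag_mem_closure g hg₁ hg₂
    have h2 := diag_mem_closure h hh₁ hh₂
    generalize g.val * m₁ * g⁻¹.val = A at *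
    generalize g.val * m₂ * g⁻¹.val = B at *
    generalize h.val * n₁ * h⁻¹.val = A' at *
    generalize h.val * n₂ * h⁻¹.val = B' at *
    obtain ⟨σ, hσ⟩ := exists_perm_of_map_eq _ _ H
    have hA : ∀ i, A i i = A' (σ i) (σ i) := fun i => congrArg Prod.fst (hσ i)
    have hB : ∀ i, B i i = B' (σ i) (σ i) := fun i => congrArg Prod.snd (hσ i)
    let P : GL (Fin r) ℂ := ⟨(1 : Matrix (Fin r) (Fin r) ℂ).submatrix σ id,
      (1 : Matrix (Fin r) (Fin r) ℂ).submatrix id σ,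
      by rw [← submatrix_mul _ _ _ _ _ Function.bijective_id]; simp,
      by rw [← submatrix_mul _ _ _ _ _ σ.bijective]; simp⟩
    have hP : ∀ d : Fin r → ℂ, P.val * diagonal d * P⁻¹.val = diagonal (fun i => d (σ i)) := by
      intro d
      have e1 : P.val = (1 : Matrix (Fin r) (Fin r) ℂ).submatrix σ id := rfl
      have e2 : P⁻¹.val = (1 : Matrix (Fin r) (Fin r) ℂ).submatrix id σ := rfl
      have e3 : diagonal d = (diagonal d).submatrix id id := by simp
      rw [e1, e2, e3, ← submatrix_mul _ _ _ _ _ Function.bijective_id,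
        ← submatrix_mul _ _ _ _ _ Function.bijective_id, Matrix.one_mul, Matrix.mul_one,
        submatrix_diagonal_equiv]
      rfl
    have h3 := conjOrbit_closure_conj P h2
    simp only [hP, ← hA, ← hB] at h3
    exact ⟨_, h1, h3⟩
end

section
/- Let r ≥ 1, let (m₁, m₂) be a commuting pair of r×r complex matrices, let A = Algebra.adjoin ℂ {m₁, m₂} be the unital ℂ-subalgebra of M_r(ℂ) generated by m₁ and m₂, and suppose v ∈ ℂʳ is cyclic for (m₁, m₂). Then the ℂ-linear evaluation map A → ℂʳ, a ↦ a.mulVec v, is a linear isomorphism; in particular, the ℂ-dimension of A equals r. -/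
open Matrix

/-- `v` is a cyclic vector for the pair `(m₁, m₂)`: the orbit of `v` under the unital
subalgebra of `M_r(ℂ)` generated by `m₁` and `m₂` is all of `ℂʳ`. -/
def CyclicVec (r : ℕ) (m₁ m₂ : Matrix (Fin r) (Fin r) ℂ) (v : Fin r → ℂ) : Prop :=
  {w | ∃ a ∈ Algebra.adjoin ℂ {m₁, m₂}, Matrix.mulVec a v = w} = Set.univ

/-- If `v` is cyclic for the commuting pair `(m₁, m₂)`, then evaluation at `v` is a linear
isomorphism from `Algebra.adjoin ℂ {m₁, m₂}` onto `ℂʳ`; in particular this algebra has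
dimension `r`. -/
theorem stmt7 (r : ℕ) (hr : 1 ≤ r) (m₁ m₂ : Matrix (Fin r) (Fin r) ℂ)
    (hcomm : m₁ * m₂ = m₂ * m₁) (v : Fin r → ℂ) (hv : CyclicVec r m₁ m₂ v) :
    (∃ e : Algebra.adjoin ℂ {m₁, m₂} ≃ₗ[ℂ] (Fin r → ℂ),
        ∀ a : Algebra.adjoin ℂ {m₁, m₂}, e a = Matrix.mulVec (a : Matrix (Fin r) (Fin r) ℂ) v) ∧
      Module.finrank ℂ (Algebra.adjoin ℂ {m₁, m₂}) = r := by
  have hc : ∀ a ∈ Algebra.adjoin ℂ {m₁, m₂}, ∀ b ∈ Algebra.adjoin ℂ {m₁, m₂},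
      a * b = b * a := by
    have hcs : ∀ x ∈ ({m₁, m₂} : Set (Matrix (Fin r) (Fin r) ℂ)),
        ∀ y ∈ ({m₁, m₂} : Set (Matrix (Fin r) (Fin r) ℂ)), x * y = y * x := by
      rintro x (rfl | rfl) y (rfl | rfl)
      · rfl
      · exact hcomm
      · exact hcomm.symm
      · rfl
    intro a ha b hb
    letI := Algebra.adjoinCommRingOfComm ℂ hcs
    exact congrArg Subtype.val
      (mul_comm (⟨a, ha⟩ : Algebra.adjoin ℂ {m₁, m₂}) ⟨b, hb⟩)
  have hsurj : ∀ w, ∃ a ∈ Algebra.adjoin ℂ {m₁, m₂}, Matrix.mulVec a v = w := by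
    intro w
    have : w ∈ {w | ∃ a ∈ Algebra.adjoin ℂ {m₁, m₂}, Matrix.mulVec a v = w} := by
      rw [show _ = Set.univ from hv]; trivial
    exact this
  let f : Algebra.adjoin ℂ {m₁, m₂} →ₗ[ℂ] (Fin r → ℂ) :=
    { toFun := fun a => Matrix.mulVec (a : Matrix (Fin r) (Fin r) ℂ) v
      map_add' := fun a b => Matrix.add_mulVec _ _ _
      map_smul' := fun c a => Matrix.smul_mulVec _ _ _ }
  have hf : Function.Bijective f := by
    constructor
    · rw [injective_iff_map_eq_zero]
      rintro ⟨a, ha⟩ h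
      have h0 : Matrix.mulVec a v = 0 := h
      have : a = 0 := by
        apply Matrix.ext_of_mulVec_single
        intro i
        obtain ⟨b, hb, hbw⟩ := hsurj (Pi.single i 1)
        rw [← hbw, Matrix.mulVec_mulVec, hc a ha b hb, ← Matrix.mulVec_mulVec, h0]
        simp
      exact Subtype.ext this
    · intro w
      obtain ⟨a, ha, h⟩ := hsurj w
      exact ⟨⟨a, ha⟩, h⟩
  refine ⟨⟨LinearEquiv.ofBijective f hf, fun a => rfl⟩, ?_⟩
  rw [(LinearEquiv.ofBijective f hf).finrank_eq]
  simp
end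

section
/- Let r ≥ 1 and let (m₁, m₂) be a commuting pair of r×r complex matrices. Then the unital ℂ-subalgebra Algebra.adjoin ℂ {m₁, m₂} of M_r(ℂ) generated by m₁ and m₂ has ℂ-dimension at most r. -/
open Matrix

open Polynomial in
lemma gh_ch {D M : Type*} [CommRing D] [IsDomain D] [IsPrincipalIdealRing D]
    [AddCommGroup M] [Module D M] (B : Module.End D M) (j : ℕ) (m : Fin j → M)
    (N : Submodule D M) (hN : N ≤ Submodule.span D (Set.range m))
    (hB : ∀ x ∈ N, B x ∈ N) :
    ∃ p : D[X], p.Monic ∧ p.natDegree = j ∧ ∀ x ∈ N, aeval B p x = 0 := by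
  let π : (Fin j → D) →ₗ[D] M := Fintype.linearCombination D m
  let P := N.comap π
  have hr : Module.finrank D P ≤ j := by
    have := Submodule.finrank_le P
    simpa using this
  let g : P →ₗ[D] N := π.restrict (fun x hx => hx)
  have hg : Function.Surjective g := by
    rintro ⟨x, hx⟩
    have h1 := hN hx
    rw [← Fintype.range_linearCombination] at h1
    obtain ⟨y, hy⟩ := h1
    refine ⟨⟨y, ?_⟩, ?_⟩
    · change π y ∈ N
      change π y = x at hy
      rw [hy]; exact hx
    · ext; exact hy
  obtain ⟨F, hF⟩ := Module.projective_lifting_property g ((B.restrict hB).comp g) hg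
  have key : ∀ p : D[X], ∀ y : P, aeval B p (g y : M) = (g (aeval F p y) : M) := by
    intro p
    induction p using Polynomial.induction_on' with
    | add p q hp hq => intro y; simp [hp, hq]
    | monomial n c =>
      intro y
      have : ∀ n : ℕ, ∀ y : P, (B ^ n) (g y : M) = (g ((F ^ n) y) : M) := by
        intro n
        induction n with
        | zero => intro y; simp
        | succ n ih =>
          intro y
          rw [pow_succ, pow_succ, Module.End.mul_apply, Module.End.mul_apply, ← ih]
          have := congrArg Subtype.val (LinearMap.congr_fun hF y)
          simp at this
          rw [this]
      simp [aeval_monomial, this, Module.algebraMap_end_apply]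
  refine ⟨F.charpoly * X ^ (j - Module.finrank D P), ?_, ?_, ?_⟩
  · exact F.charpoly_monic.mul (monic_X_pow _)
  · rw [F.charpoly_monic.natDegree_mul (monic_X_pow _), LinearMap.charpoly_natDegree, natDegree_X_pow]
    omega
  · intro x hx
    obtain ⟨y, hy⟩ := hg ⟨x, hx⟩
    have : x = (g y : M) := by rw [hy]
    rw [this, key, mul_comm, map_mul, LinearMap.aeval_self_charpoly]
    simp

open Polynomial in
lemma gh_sup {K M : Type*} [Field K] [AddCommGroup M] [Module K M] [Module K[X] M]
    [IsScalarTower K K[X] M] (S : Submodule K[X] M) (v : M) (d : K[X]) (hd : d ≠ 0)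
    [FiniteDimensional K S]
    (h : d • v ∈ S) :
    FiniteDimensional K ↥(S ⊔ Submodule.span K[X] {v}) ∧
    Module.finrank K ↥(S ⊔ Submodule.span K[X] {v}) ≤ Module.finrank K S + d.natDegree := by
  let f : degreeLT K d.natDegree →ₗ[K] M :=
    ((LinearMap.toSpanSingleton K[X] M v).restrictScalars K).comp (Submodule.subtype _)
  have hW : (S ⊔ Submodule.span K[X] {v}).restrictScalars K = S.restrictScalars K ⊔ LinearMap.range f := by
    apply le_antisymm
    · intro x hx
      rw [Submodule.restrictScalars_mem, Submodule.mem_sup] at hx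
      obtain ⟨s, hs, y, hy, rfl⟩ := hx
      obtain ⟨q, rfl⟩ := Submodule.mem_span_singleton.1 hy
      rw [← EuclideanDomain.mod_add_div q d, add_smul, add_comm, add_assoc, add_comm]
      refine Submodule.add_mem_sup ?_ ⟨⟨q % d, ?_⟩, rfl⟩
      · rw [Submodule.restrictScalars_mem]
        refine S.add_mem ?_ hs
        rw [mul_comm, mul_smul]
        exact S.smul_mem _ h
      · rw [mem_degreeLT, ← degree_eq_natDegree hd]
        exact EuclideanDomain.mod_lt q hd
    · refine sup_le (fun x hx => Submodule.mem_sup_left hx) ?_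
      rintro _ ⟨q, rfl⟩
      exact Submodule.mem_sup_right (Submodule.mem_span_singleton.2 ⟨q, rfl⟩)
  have : FiniteDimensional K (S.restrictScalars K) := ‹FiniteDimensional K S›
  have : FiniteDimensional K (degreeLT K d.natDegree) := Module.Finite.equiv (degreeLTEquiv K _).symm
  have h1 := Submodule.finrank_add_le_finrank_add_finrank (S.restrictScalars K) (LinearMap.range f)
  have h2 := LinearMap.finrank_range_le f
  rw [(degreeLTEquiv K d.natDegree).finrank_eq, Module.finrank_fin_fun] at h2
  have h3 : FiniteDimensional K ↥(S.restrictScalars K ⊔ LinearMap.range f) := inferInstance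
  rw [← hW] at h1 h3
  refine ⟨h3, h1.trans (Nat.add_le_add_left h2 _)⟩

open Polynomial in
lemma gh_step {K M : Type*} [Field K] [Infinite K] [AddCommGroup M] [Module K M] [Module K[X] M]
    [IsScalarTower K K[X] M] [FiniteDimensional K M] (N : Submodule K[X] M) :
    ∃ (v : M) (d : K[X]), d ≠ 0 ∧ (∀ x, d • x ∈ N) ∧
      Module.finrank K N + d.natDegree ≤ Module.finrank K ↥(N ⊔ Submodule.span K[X] {v}) := by
  classical
  let I : Ideal K[X] := N.colon Set.univ
  have hI : ∀ q, q ∈ I ↔ ∀ x, q • x ∈ N := by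
    intro q; simp [I, Submodule.mem_colon]
  obtain ⟨d, hd⟩ : ∃ d, ∀ q, d ∣ q ↔ ∀ x, q • x ∈ N := by
    obtain ⟨d, hd⟩ := (IsPrincipalIdealRing.principal I).principal
    refine ⟨d, fun q => ?_⟩
    rw [← hI, hd]
    exact Ideal.mem_span_singleton.symm
  have hd0 : d ≠ 0 := by
    rintro rfl
    -- annihilator nonzero
    let φ : M →ₗ[K] M := (LinearMap.lsmul K[X] M X).restrictScalars K
    have hφ : ∀ q : K[X], ∀ x, aeval φ q x = q • x := by
      intro q x
      induction q using Polynomial.induction_on' generalizing x with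
      | add p q hp hq => simp [hp, hq, add_smul]
      | monomial n c =>
        have : ∀ n : ℕ, (φ ^ n) x = (X ^ n : K[X]) • x := by
          intro n
          induction n with
          | zero => simp
          | succ n ih =>
            rw [pow_succ', Module.End.mul_apply, ih, pow_succ', mul_smul]; rfl
        rw [aeval_monomial, ← C_mul_X_pow_eq_monomial, mul_smul, Module.End.mul_apply, this,
          Module.algebraMap_end_apply, ← mul_one (C c), ← Polynomial.smul_eq_C_mul, smul_assoc, one_smul]
    have h := (hd (minpoly K φ)).2 (fun x => by rw [← hφ, minpoly.aeval]; simp)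
    exact minpoly.ne_zero (Algebra.IsIntegral.isIntegral φ) (zero_dvd_iff.1 h)
  have hdN := (hd d).1 dvd_rfl
  let U : K[X] → Submodule K M := fun q =>
    (N.comap (LinearMap.lsmul K[X] M q)).restrictScalars K
  have hU : ∀ q x, x ∈ U q ↔ q • x ∈ N := fun q x => Iff.rfl
  obtain ⟨v, hv⟩ : ∃ v, ∀ q, q • v ∈ N → d ∣ q := by
    let s : Finset (Submodule K M) :=
      (UniqueFactorizationMonoid.normalizedFactors d).toFinset.image (fun p => U (d / p))
    have hs : ⊤ ∉ s := by
      intro ht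
      obtain ⟨p, hp, hpt⟩ := Finset.mem_image.1 ht
      rw [Multiset.mem_toFinset] at hp
      have hpd := UniqueFactorizationMonoid.dvd_of_mem_normalizedFactors hp
      have hpi := UniqueFactorizationMonoid.irreducible_of_normalized_factor p hp
      have h1 : d ∣ d / p := (hd _).2 (fun x => by rw [← hU, hpt]; trivial)
      obtain ⟨e, rfl⟩ := hpd
      rw [mul_div_cancel_left₀ _ hpi.ne_zero] at h1
      obtain ⟨c, hc⟩ := h1
      have he : e ≠ 0 := right_ne_zero_of_mul hd0
      apply hpi.not_isUnit
      refine IsUnit.of_mul_eq_one c ?_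
      apply mul_left_cancel₀ he
      rw [mul_one]
      conv_rhs => rw [hc]
      ring
    have hne := Subspace.biUnion_ne_univ_of_top_notMem hs
    rw [Set.ne_univ_iff_exists_notMem] at hne
    obtain ⟨v, hv⟩ := hne
    refine ⟨v, fun q hq => ?_⟩
    by_contra hdq
    apply hv
    have hg : EuclideanDomain.gcd q d • v ∈ N := by
      rw [EuclideanDomain.gcd_eq_gcd_ab, add_smul, mul_comm, mul_smul, mul_comm d, mul_smul]
      exact N.add_mem (N.smul_mem _ hq) (N.smul_mem _ (hdN v))
    obtain ⟨h, hh⟩ := EuclideanDomain.gcd_dvd_right q d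
    have hhu : ¬ IsUnit h := by
      intro hu
      apply hdq
      have : d ∣ EuclideanDomain.gcd q d := by
        conv_lhs => rw [hh]
        exact hu.mul_right_dvd.2 dvd_rfl
      exact this.trans (EuclideanDomain.gcd_dvd_left q d)
    have hh0 : h ≠ 0 := by
      rintro rfl
      rw [mul_zero] at hh
      exact hd0 hh
    obtain ⟨p, hp, hph⟩ := WfDvdMonoid.exists_irreducible_factor hhu hh0
    have hpd : p ∣ d := hph.trans ⟨_, by rw [mul_comm]; exact hh⟩
    obtain ⟨p', hp', hass⟩ := UniqueFactorizationMonoid.exists_mem_normalizedFactors_of_dvd hd0 hp hpd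
    have hp'0 : p' ≠ 0 := (UniqueFactorizationMonoid.irreducible_of_normalized_factor p' hp').ne_zero
    have hp'h : p' ∣ h := hass.symm.dvd.trans hph
    refine Set.mem_biUnion (x := U (d / p')) (Finset.mem_coe.2 (Finset.mem_image.2 ⟨p', Multiset.mem_toFinset.2 hp', rfl⟩)) ?_
    change (d / p') • v ∈ N
    obtain ⟨e, he⟩ := hp'h
    have : d / p' = e * EuclideanDomain.gcd q d := by
      conv_lhs => rw [hh, he]
      rw [mul_left_comm, mul_div_cancel_left₀ _ hp'0, mul_comm]
    rw [this, mul_smul]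
    exact N.smul_mem _ hg
  refine ⟨v, d, hd0, hdN, ?_⟩
  let f : degreeLT K d.natDegree →ₗ[K] M :=
    ((LinearMap.toSpanSingleton K[X] M v).restrictScalars K).comp (Submodule.subtype _)
  have hfN : ∀ q, f q ∈ N → q = 0 := by
    rintro ⟨q, hq⟩ h
    have := hv q h
    rw [mem_degreeLT, ← degree_eq_natDegree hd0] at hq
    ext1
    exact eq_zero_of_dvd_of_degree_lt this hq
  have hfi : Function.Injective f := by
    rw [← LinearMap.ker_eq_bot, LinearMap.ker_eq_bot']
    intro q hq
    exact hfN q (by rw [hq]; exact N.zero_mem)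
  have hdis : N.restrictScalars K ⊓ LinearMap.range f = ⊥ := by
    rw [eq_bot_iff]
    rintro _ ⟨hx, q, rfl⟩
    rw [hfN q hx]; simp
  have h1 := Submodule.finrank_sup_add_finrank_inf_eq (N.restrictScalars K) (LinearMap.range f)
  rw [hdis, finrank_bot, add_zero, LinearMap.finrank_range_of_inj hfi,
    (degreeLTEquiv K d.natDegree).finrank_eq, Module.finrank_fin_fun] at h1
  refine h1.symm.le.trans ?_
  have : N.restrictScalars K ⊔ LinearMap.range f ≤ (N ⊔ Submodule.span K[X] {v}).restrictScalars K := by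
    refine sup_le (fun x hx => Submodule.mem_sup_left hx) ?_
    rintro _ ⟨q, rfl⟩
    exact Submodule.mem_sup_right (Submodule.mem_span_singleton.2 ⟨q, rfl⟩)
  exact Submodule.finrank_mono this

open Polynomial in
lemma gh_main {K M : Type*} [Field K] [Infinite K] [AddCommGroup M] [Module K M] [Module K[X] M]
    [IsScalarTower K K[X] M] [FiniteDimensional K M] (B : Module.End K[X] M) :
    FiniteDimensional K (Subalgebra.toSubmodule (Algebra.adjoin K[X] {B})) ∧
    Module.finrank K (Subalgebra.toSubmodule (Algebra.adjoin K[X] {B})) ≤ Module.finrank K M := by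
  classical
  choose v d hd0 hdN hfr using (gh_step (K := K) (M := M))
  obtain ⟨N, hN0, hNs⟩ : ∃ N : ℕ → Submodule K[X] M, N 0 = ⊥ ∧
      ∀ n, N (n+1) = N n ⊔ Submodule.span K[X] {v (N n)} :=
    ⟨fun n => Nat.rec ⊥ (fun _ N => N ⊔ Submodule.span K[X] {v N}) n, rfl, fun n => rfl⟩
  have hNsp : ∀ n, N n ≤ Submodule.span K[X] (Set.range (fun i : Fin n => v (N i))) := by
    intro n
    induction n with
    | zero => rw [hN0]; exact bot_le
    | succ n ih =>
      rw [hNs]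
      refine sup_le (ih.trans (Submodule.span_mono ?_)) (Submodule.span_mono ?_)
      · rintro _ ⟨i, rfl⟩
        exact ⟨i.castSucc, rfl⟩
      · rintro _ rfl
        exact ⟨Fin.last n, rfl⟩
  have hNf : ∀ n : ℕ, ∑ i ∈ Finset.range n, (d (N i)).natDegree ≤ Module.finrank K ↥(N n) := by
    intro n
    induction n with
    | zero => simp
    | succ n ih =>
      rw [Finset.sum_range_succ, hNs]
      exact (Nat.add_le_add_right ih _).trans (hfr (N n))
  obtain ⟨S, hS0, hSs⟩ : ∃ S : ℕ → Submodule K[X] (Module.End K[X] M), S 0 = ⊥ ∧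
      ∀ n, S (n+1) = S n ⊔ Submodule.span K[X] {B ^ n} :=
    ⟨fun n => Nat.rec ⊥ (fun n S => S ⊔ Submodule.span K[X] {B ^ n}) n, rfl, fun n => rfl⟩
  have hSm : ∀ n i, i < n → B ^ i ∈ S n := by
    intro n
    induction n with
    | zero => intro i hi; omega
    | succ n ih =>
      intro i hi
      rw [hSs]
      rcases Nat.lt_succ_iff_lt_or_eq.1 hi with h | rfl
      · exact Submodule.mem_sup_left (ih i h)
      · exact Submodule.mem_sup_right (Submodule.mem_span_singleton_self _)
  have hSd : ∀ n, d (N n) • B ^ n ∈ S n := by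
    intro n
    let R : Submodule K[X] M := LinearMap.range (LinearMap.lsmul K[X] M (d (N n)))
    obtain ⟨p, hpm, hpn, hp⟩ := gh_ch B n (fun i : Fin n => v (N i)) R
      (by
        rintro _ ⟨x, rfl⟩
        exact hNsp n (hdN (N n) x))
      (by
        rintro _ ⟨x, rfl⟩
        exact ⟨B x, by simp⟩)
    have h0 : d (N n) • aeval B p = 0 := by
      ext x
      have := hp (d (N n) • x) ⟨x, rfl⟩
      rw [map_smul] at this
      simpa using this
    rw [hpm.as_sum, hpn, map_add, smul_add, map_pow, aeval_X] at h0
    rw [eq_neg_of_add_eq_zero_left h0]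
    refine (S n).neg_mem ((S n).smul_mem _ ?_)
    rw [map_sum]
    refine (S n).sum_mem fun i hi => ?_
    rw [map_mul, aeval_C, map_pow, aeval_X, ← Algebra.smul_def]
    exact (S n).smul_mem _ (hSm n i (Finset.mem_range.1 hi))
  have hSf : ∀ n, FiniteDimensional K (S n) ∧
      Module.finrank K (S n) ≤ ∑ i ∈ Finset.range n, (d (N i)).natDegree := by
    intro n
    induction n with
    | zero =>
      rw [hS0]
      refine ⟨inferInstance, (Module.finrank_zero_of_subsingleton (R := K)).trans_le (Nat.zero_le _)⟩
    | succ n ih =>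
      obtain ⟨h1, h2⟩ := ih
      obtain ⟨h3, h4⟩ := gh_sup (S n) (B ^ n) (d (N n)) (hd0 _) (hSd n)
      rw [hSs]
      refine ⟨h3, ?_⟩
      rw [Finset.sum_range_succ]
      exact h4.trans (Nat.add_le_add_right h2 _)
  have : Module.Finite K[X] M := Module.Finite.of_restrictScalars_finite K K[X] M
  obtain ⟨χ, hχ, hχ0⟩ := LinearMap.exists_monic_and_aeval_eq_zero K[X] B
  have hle : Subalgebra.toSubmodule (Algebra.adjoin K[X] {B}) ≤ S χ.natDegree := by
    intro x hx
    rw [Subalgebra.mem_toSubmodule, Algebra.adjoin_singleton_eq_range_aeval] at hx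
    obtain ⟨q, rfl⟩ := hx
    change aeval B q ∈ _
    rw [← modByMonic_add_div q χ, map_add, map_mul, hχ0, zero_mul, add_zero]
    rw [aeval_eq_sum_range]
    refine Submodule.sum_mem _ fun i hi => ?_
    by_cases h0 : (q %ₘ χ).coeff i = 0
    · rw [h0, zero_smul]; exact Submodule.zero_mem _
    · refine Submodule.smul_mem _ _ (hSm _ _ ?_)
      have h1 := le_degree_of_ne_zero h0
      have h2 := degree_modByMonic_lt q hχ
      rw [degree_eq_natDegree hχ.ne_zero] at h2
      exact_mod_cast h1.trans_lt h2
  obtain ⟨h1, h2⟩ := hSf χ.natDegree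
  have h1' : FiniteDimensional K ((S χ.natDegree).restrictScalars K) := h1
  have hle' : (Subalgebra.toSubmodule (Algebra.adjoin K[X] {B})).restrictScalars K ≤
    (S χ.natDegree).restrictScalars K := hle
  refine ⟨Submodule.finiteDimensional_of_le hle', ?_⟩
  refine (Submodule.finrank_mono hle').trans (h2.trans ((hNf _).trans ?_))
  exact Submodule.finrank_le ((N χ.natDegree).restrictScalars K)

open Polynomial in
lemma gh_end {K V : Type*} [Field K] [Infinite K] [AddCommGroup V] [Module K V]
    [FiniteDimensional K V] (a b : Module.End K V) (hab : a * b = b * a) :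
    Module.finrank K (Algebra.adjoin K {a, b}) ≤ Module.finrank K V := by
  let M := Module.AEval' a
  let o : V ≃ₗ[K] M := Module.AEval'.of a
  let B : Module.End K[X] M := LinearMap.ofAEval a (o.toLinearMap ∘ₗ b) (by
    intro m
    change o (b (a m)) = (X : K[X]) • o (b m)
    rw [Module.AEval'.X_smul_of, ← Module.End.mul_apply, ← hab]; rfl)
  have hB : ∀ x, B (o x) = o (b x) := fun x => rfl
  let Ψ : Module.End K[X] M →ₗ[K] Module.End K V :=
    { toFun := fun f => o.symm.toLinearMap ∘ₗ f.restrictScalars K ∘ₗ o.toLinearMap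
      map_add' := fun f g => by ext; simp
      map_smul' := fun c f => by ext; simp }
  have hΨ : ∀ f x, Ψ f x = o.symm (f (o x)) := fun f x => rfl
  let T : Submodule K (Module.End K[X] M) :=
    (Subalgebra.toSubmodule (Algebra.adjoin K[X] {B})).restrictScalars K
  have hT : ∀ f, f ∈ T ↔ f ∈ Algebra.adjoin K[X] {B} := fun f => Iff.rfl
  obtain ⟨h1, h2⟩ := gh_main B
  have h1' : FiniteDimensional K T := h1
  have hle : Subalgebra.toSubmodule (Algebra.adjoin K {a, b}) ≤ T.map Ψ := by
    intro x hx
    rw [Subalgebra.mem_toSubmodule] at hx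
    induction hx using Algebra.adjoin_induction with
    | mem x hx =>
      rcases hx with rfl | rfl
      · refine ⟨algebraMap K[X] _ X, Subalgebra.algebraMap_mem _ _, ?_⟩
        ext y
        rw [hΨ, Module.algebraMap_end_apply, Module.AEval'.X_smul_of]
        simp [o]
      · refine ⟨B, Algebra.subset_adjoin rfl, ?_⟩
        ext y
        rw [hΨ, hB]; simp
    | algebraMap c =>
      refine ⟨algebraMap K[X] _ (C c), Subalgebra.algebraMap_mem _ _, ?_⟩
      ext y
      rw [hΨ, Module.algebraMap_end_apply, Module.algebraMap_end_apply]
      change o.symm (C c • o y) = _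
      rw [Module.AEval.C_smul, map_smul]; simp
    | add x y _ _ hx hy => exact Submodule.add_mem _ hx hy
    | mul x y _ _ hx hy =>
      obtain ⟨f, hf, rfl⟩ := hx
      obtain ⟨g, hg, rfl⟩ := hy
      refine ⟨f * g, Subalgebra.mul_mem _ hf hg, ?_⟩
      ext z
      simp [hΨ]
  refine (Submodule.finrank_mono hle).trans ((Submodule.finrank_map_le Ψ T).trans ?_)
  exact h2.trans o.finrank_eq.symm.le

lemma gh_transfer {K A A' : Type*} [Field K] [Ring A] [Ring A'] [Algebra K A] [Algebra K A']
    (e : A ≃ₐ[K] A') (x y : A) :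
    Module.finrank K (Algebra.adjoin K {x, y}) = Module.finrank K (Algebra.adjoin K {e x, e y}) := by
  have h2 : (Algebra.adjoin K {x, y}).map e.toAlgHom = Algebra.adjoin K {e x, e y} := by
    rw [AlgHom.map_adjoin, Set.image_pair]; rfl
  rw [← h2]
  exact ((Algebra.adjoin K {x, y}).equivMapOfInjective e.toAlgHom
    e.injective).toLinearEquiv.finrank_eq

/-- The unital subalgebra of `M_r(ℂ)` generated by a commuting pair of `r × r` complex
matrices has `ℂ`-dimension at most `r`. -/
theorem stmt9 (r : ℕ) (hr : 1 ≤ r) (m₁ m₂ : Matrix (Fin r) (Fin r) ℂ)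
    (hcomm : m₁ * m₂ = m₂ * m₁) :
    Module.finrank ℂ (Algebra.adjoin ℂ {m₁, m₂}) ≤ r := by
  have h0 := congrArg (Matrix.toLinAlgEquiv' (R := ℂ)) hcomm
  rw [map_mul, map_mul] at h0
  have h := gh_end (Matrix.toLinAlgEquiv' (R := ℂ) m₁) (Matrix.toLinAlgEquiv' (R := ℂ) m₂) h0
  have h2 := (gh_transfer (Matrix.toLinAlgEquiv' (R := ℂ) (n := Fin r)) m₁ m₂)
  have h3 : Module.finrank ℂ (Fin r → ℂ) = r := Module.finrank_fin_fun ℂ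
  rw [h3] at h
  rw [h2]
  exact h
end

section
/- Let r ≥ 1, let (m₁, m₂) be a commuting pair of r×r complex matrices admitting a cyclic vector v ∈ ℂʳ. Then every matrix c ∈ M_r(ℂ) with c m₁ = m₁ c and c m₂ = m₂ c belongs to Algebra.adjoin ℂ {m₁, m₂}. That is, the commutant of {m₁, m₂} in M_r(ℂ) coincides with the unital subalgebra generated by m₁ and m₂ (and hence has ℂ-dimension r). -/
open Matrix

/-- If a commuting pair `(m₁, m₂)` admits a cyclic vector, then the commutant of
`{m₁, m₂}` in `M_r(ℂ)` coincides with the unital subalgebra generated by `m₁, m₂`. -/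
theorem stmt11 (r : ℕ) (hr : 1 ≤ r) (m₁ m₂ : Matrix (Fin r) (Fin r) ℂ)
    (hcomm : m₁ * m₂ = m₂ * m₁) (v : Fin r → ℂ) (hv : CyclicVec r m₁ m₂ v)
    (c : Matrix (Fin r) (Fin r) ℂ) (hc₁ : c * m₁ = m₁ * c) (hc₂ : c * m₂ = m₂ * c) :
    c ∈ Algebra.adjoin ℂ {m₁, m₂} := by
  have key : ∀ x : Matrix (Fin r) (Fin r) ℂ, x * m₁ = m₁ * x → x * m₂ = m₂ * x →
      ∀ b ∈ Algebra.adjoin ℂ {m₁, m₂}, x * b = b * x := by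
    intro x h1 h2 b hb
    induction hb using Algebra.adjoin_induction with
    | mem y hy =>
      rcases hy with rfl | rfl
      · exact h1
      · exact h2
    | algebraMap t => exact (Algebra.commutes t x).symm
    | add y z _ _ hy hz => rw [mul_add, add_mul, hy, hz]
    | mul y z _ _ hy hz => rw [← mul_assoc, hy, mul_assoc, hz, mul_assoc]
  have hsurj : ∀ w : Fin r → ℂ, ∃ a ∈ Algebra.adjoin ℂ {m₁, m₂}, Matrix.mulVec a v = w := by
    intro w
    have : w ∈ {w | ∃ a ∈ Algebra.adjoin ℂ {m₁, m₂}, Matrix.mulVec a v = w} := by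
      have h := hv
      unfold CyclicVec at h
      rw [h]
      trivial
    exact this
  obtain ⟨a, ha, hav⟩ := hsurj (Matrix.mulVec c v)
  have ha1 : a * m₁ = m₁ * a :=
    (key m₁ rfl hcomm a ha).symm
  have ha2 : a * m₂ = m₂ * a :=
    (key m₂ hcomm.symm rfl a ha).symm
  have hca : c = a := by
    apply Matrix.ext_of_mulVec_single
    intro i
    obtain ⟨b, hb, hbv⟩ := hsurj (Pi.single i 1)
    rw [← hbv, Matrix.mulVec_mulVec, Matrix.mulVec_mulVec, key c hc₁ hc₂ b hb,
      key a ha1 ha2 b hb, ← Matrix.mulVec_mulVec, ← Matrix.mulVec_mulVec, hav]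
  rw [hca]
  exact ha
end

section
/- Let r ≥ 1, let (m₁, m₂) be a commuting pair of r×r complex matrices, and let v, v′ ∈ ℂʳ both be cyclic for (m₁, m₂). Then there exists a ∈ Algebra.adjoin ℂ {m₁, m₂} such that a is invertible in M_r(ℂ) and a.mulVec v = v′. That is, any two cyclic vectors for a commuting pair are related by an invertible element of the algebra generated by the pair. -/
open Matrix

/-- Any two cyclic vectors for a commuting pair `(m₁, m₂)` are related by an invertible
element of the unital subalgebra generated by `m₁` and `m₂`. -/
theorem stmt12 (r : ℕ) (hr : 1 ≤ r) (m₁ m₂ : Matrix (Fin r) (Fin r) ℂ)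
    (hcomm : m₁ * m₂ = m₂ * m₁) (v v' : Fin r → ℂ)
    (hv : CyclicVec r m₁ m₂ v) (hv' : CyclicVec r m₁ m₂ v') :
    ∃ a ∈ Algebra.adjoin ℂ {m₁, m₂}, IsUnit a ∧ Matrix.mulVec a v = v' := by
  have hm : ∀ w, ∃ a ∈ Algebra.adjoin ℂ {m₁, m₂}, Matrix.mulVec a v = w := fun w => by
    have h : w ∈ (Set.univ : Set (Fin r → ℂ)) := Set.mem_univ w
    rw [← hv] at h
    exact h
  have hm' : ∀ w, ∃ a ∈ Algebra.adjoin ℂ {m₁, m₂}, Matrix.mulVec a v' = w := fun w => by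
    have h : w ∈ (Set.univ : Set (Fin r → ℂ)) := Set.mem_univ w
    rw [← hv'] at h
    exact h
  have hc : ∀ x ∈ Algebra.adjoin ℂ {m₁, m₂}, ∀ y ∈ Algebra.adjoin ℂ {m₁, m₂},
      x * y = y * x := by
    intro x hx y hy
    letI := Algebra.adjoinCommRingOfComm ℂ (s := {m₁, m₂}) (by
      rintro a (rfl | rfl) b (rfl | rfl)
      · rfl
      · exact hcomm
      · exact hcomm.symm
      · rfl)
    exact congrArg Subtype.val
      (mul_comm (⟨x, hx⟩ : Algebra.adjoin ℂ {m₁, m₂}) ⟨y, hy⟩)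
  obtain ⟨a, ha, hav⟩ := hm v'
  obtain ⟨b, hb, hbv⟩ := hm' v
  refine ⟨a, ha, ?_, hav⟩
  have hba : b * a = 1 := by
    apply Matrix.mulVec_injective
    funext w
    obtain ⟨c, hcm, rfl⟩ := hm w
    rw [Matrix.mulVec_mulVec, hc _ (mul_mem hb ha) c hcm, ← Matrix.mulVec_mulVec,
      ← Matrix.mulVec_mulVec, hav, hbv, Matrix.one_mulVec]
  exact IsUnit.of_mul_eq_one b (mul_eq_one_comm.mp hba)
end

section
/- Let r ≥ 1. Suppose (m₁, m₂, v) and (m₁′, m₂′, v′) are triples where (m₁, m₂) and (m₁′, m₂′) are commuting pairs of r×r complex matrices, v is cyclic for (m₁, m₂), v′ is cyclic for (m₁′, m₂′), and there exists g ∈ GL_r(ℂ) with g m₁ g⁻¹ = m₁′ and g m₂ g⁻¹ = m₂′. Then there exists h ∈ GL_r(ℂ) with h m₁ h⁻¹ = m₁′, h m₂ h⁻¹ = m₂′ and h.mulVec v = v′. Consequently, the forgetful map (m₁, m₂, v) ↦ (m₁, m₂) induces a bijection between GL_r(ℂ)-orbits of triples with cyclic vector and GL_r(ℂ)-orbits of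 commuting pairs admitting a cyclic vector. -/
open Matrix

theorem commute_adjoin_aux {r : ℕ} {x y z c : Matrix (Fin r) (Fin r) ℂ}
    (hx : Commute z x) (hy : Commute z y) (hc : c ∈ Algebra.adjoin ℂ {x, y}) : Commute z c := by
  induction hc using Algebra.adjoin_induction with
  | mem t ht =>
    rcases ht with rfl | ht
    · exact hx
    · rw [Set.mem_singleton_iff] at ht
      rw [ht]; exact hy
  | algebraMap k => exact (Algebra.commutes k z).symm
  | add a b _ _ ha hb => exact ha.add_right hb
  | mul a b _ _ ha hb => exact ha.mul_right hb

theorem commute_conj_aux {r : ℕ} {m b : Matrix (Fin r) (Fin r) ℂ} (g : GL (Fin r) ℂ)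
    (h : Commute b (g.val * m * g⁻¹.val)) : Commute (g⁻¹.val * b * g.val) m := by
  have h1 : g⁻¹.val * g.val = 1 := g.inv_mul
  have h2 := congrArg (fun t => g⁻¹.val * t * g.val) h.eq
  simp only [mul_assoc, h1, mul_one] at h2
  simp only [← mul_assoc, h1, one_mul] at h2
  simpa only [Commute, SemiconjBy, ← mul_assoc] using h2

/-- If two commuting pairs with cyclic vectors are conjugate as pairs, then the triples
(including the cyclic vectors) are conjugate: some `h ∈ GL r ℂ` conjugates the pair and
carries `v` to `v′`.  Hence the forgetful map is a bijection from orbits of triples with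
cyclic vector onto orbits of commuting pairs admitting a cyclic vector. -/
theorem stmt13 (r : ℕ) (hr : 1 ≤ r) (m₁ m₂ m₁' m₂' : Matrix (Fin r) (Fin r) ℂ)
    (hcomm : m₁ * m₂ = m₂ * m₁) (hcomm' : m₁' * m₂' = m₂' * m₁')
    (v v' : Fin r → ℂ) (hv : CyclicVec r m₁ m₂ v) (hv' : CyclicVec r m₁' m₂' v')
    (g : GL (Fin r) ℂ) (hg₁ : g.val * m₁ * g⁻¹.val = m₁') (hg₂ : g.val * m₂ * g⁻¹.val = m₂') :
    ∃ h : GL (Fin r) ℂ, h.val * m₁ * h⁻¹.val = m₁' ∧ h.val * m₂ * h⁻¹.val = m₂' ∧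
      Matrix.mulVec h.val v = v' := by
  have hgi : g.val * g⁻¹.val = 1 := g.mul_inv
  have hig : g⁻¹.val * g.val = 1 := g.inv_mul
  have ex : ∀ w, ∃ a ∈ Algebra.adjoin ℂ {m₁, m₂}, Matrix.mulVec a v = w := fun w => by
    have : w ∈ {w | ∃ a ∈ Algebra.adjoin ℂ {m₁, m₂}, Matrix.mulVec a v = w} := by
      rw [show _ = Set.univ from hv]; trivial
    exact this
  have ex' : ∀ w, ∃ a ∈ Algebra.adjoin ℂ {m₁', m₂'}, Matrix.mulVec a v' = w := fun w => by
    have : w ∈ {w | ∃ a ∈ Algebra.adjoin ℂ {m₁', m₂'}, Matrix.mulVec a v' = w} := by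
      rw [show _ = Set.univ from hv']; trivial
    exact this
  obtain ⟨a, ha, hav⟩ := ex (g⁻¹.val *ᵥ v')
  obtain ⟨b, hb, hbv⟩ := ex' (g.val *ᵥ v)
  have ha1 : Commute a m₁ := (commute_adjoin_aux (Commute.refl m₁) hcomm ha).symm
  have ha2 : Commute a m₂ := (commute_adjoin_aux hcomm.symm (Commute.refl m₂) ha).symm
  have hb1 : Commute b m₁' := (commute_adjoin_aux (Commute.refl m₁') hcomm' hb).symm
  have hb2 : Commute b m₂' := (commute_adjoin_aux hcomm'.symm (Commute.refl m₂') hb).symm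
  rw [← hg₁] at hb1
  rw [← hg₂] at hb2
  have hc1 := commute_conj_aux g hb1
  have hc2 := commute_conj_aux g hb2
  set c := g⁻¹.val * b * g.val with hc
  have hcav : (c * a) *ᵥ v = v := by
    rw [← Matrix.mulVec_mulVec, hav, hc, Matrix.mulVec_mulVec, mul_assoc, hgi, mul_one,
      ← Matrix.mulVec_mulVec, hbv, Matrix.mulVec_mulVec, hig, Matrix.one_mulVec]
  have hca : c * a = 1 := by
    apply Matrix.toLin'.injective
    apply LinearMap.ext
    intro w
    obtain ⟨d, hd, rfl⟩ := ex w
    have hcd : Commute (c * a) d :=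
      commute_adjoin_aux (hc1.mul_left ha1) (hc2.mul_left ha2) hd
    rw [Matrix.toLin'_apply, Matrix.toLin'_apply, Matrix.mulVec_mulVec, hcd.eq,
      ← Matrix.mulVec_mulVec, hcav, Matrix.one_mulVec]
  have hac : a * c = 1 := mul_eq_one_comm.mp hca
  let u : GL (Fin r) ℂ := ⟨a, c, hac, hca⟩
  have key : ∀ m, Commute a m → (g * u).val * m * (g * u)⁻¹.val = g.val * m * g⁻¹.val := by
    intro m hm
    rw [_root_.mul_inv_rev, Units.val_mul, Units.val_mul]
    change g.val * a * m * (c * g⁻¹.val) = _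
    rw [mul_assoc g.val a m, hm.eq, ← mul_assoc g.val m a, mul_assoc, ← mul_assoc a c, hac, one_mul]
  refine ⟨g * u, (key m₁ ha1).trans hg₁, (key m₂ ha2).trans hg₂, ?_⟩
  rw [Units.val_mul, ← Matrix.mulVec_mulVec]
  change g.val *ᵥ (a *ᵥ v) = v'
  rw [hav, Matrix.mulVec_mulVec, hgi, Matrix.one_mulVec]
end

section
/- Let r ≥ 1, let (m₁, m₂) be a commuting pair of r×r complex matrices and let v ∈ ℂʳ be cyclic for (m₁, m₂). Then the set {g.mulVec v : g ∈ GL_r(ℂ), g m₁ = m₁ g, g m₂ = m₂ g} — the orbit of v under the invertible elements of the commutant of {m₁, m₂} — is an open and dense subset of ℂʳ. -/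
open Matrix

/-- For a commuting pair `(m₁, m₂)` with cyclic vector `v`, the orbit of `v` under the
invertible elements of the commutant of `{m₁, m₂}` is open and dense in `ℂʳ`. -/
theorem stmt14 (r : ℕ) (hr : 1 ≤ r) (m₁ m₂ : Matrix (Fin r) (Fin r) ℂ)
    (hcomm : m₁ * m₂ = m₂ * m₁) (v : Fin r → ℂ) (hv : CyclicVec r m₁ m₂ v) :
    IsOpen {w : Fin r → ℂ | ∃ g : GL (Fin r) ℂ,
        g.val * m₁ = m₁ * g.val ∧ g.val * m₂ = m₂ * g.val ∧ Matrix.mulVec g.val v = w} ∧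
      Dense {w : Fin r → ℂ | ∃ g : GL (Fin r) ℂ,
        g.val * m₁ = m₁ * g.val ∧ g.val * m₂ = m₂ * g.val ∧ Matrix.mulVec g.val v = w} := by
  have hex : ∀ w : Fin r → ℂ, ∃ a ∈ Algebra.adjoin ℂ {m₁, m₂}, Matrix.mulVec a v = w := by
    intro w
    have : w ∈ {w | ∃ a ∈ Algebra.adjoin ℂ {m₁, m₂}, Matrix.mulVec a v = w} := by
      rw [show _ = Set.univ from hv]; trivial
    exact this
  have hc : ∀ g : Matrix (Fin r) (Fin r) ℂ, g * m₁ = m₁ * g → g * m₂ = m₂ * g →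
      ∀ a ∈ Algebra.adjoin ℂ {m₁, m₂}, g * a = a * g := by
    intro g h1 h2 a ha
    induction ha using Algebra.adjoin_induction with
    | mem x hx =>
      rcases hx with rfl | hx
      · exact h1
      · rw [Set.mem_singleton_iff] at hx
        subst hx; exact h2
    | algebraMap c => exact (Algebra.commutes c g).symm
    | add x y _ _ hx hy => rw [mul_add, add_mul, hx, hy]
    | mul x y _ _ hx hy => rw [← mul_assoc, hx, mul_assoc, hy, mul_assoc]
  have hu : ∀ g h : Matrix (Fin r) (Fin r) ℂ, g * m₁ = m₁ * g → g * m₂ = m₂ * g →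
      h * m₁ = m₁ * h → h * m₂ = m₂ * h → g *ᵥ v = h *ᵥ v → g = h := by
    intro g h g1 g2 h1 h2 e
    apply Matrix.mulVec_injective
    funext w
    obtain ⟨a, ha, rfl⟩ := hex w
    rw [Matrix.mulVec_mulVec, Matrix.mulVec_mulVec, hc g g1 g2 a ha, hc h h1 h2 a ha,
      ← Matrix.mulVec_mulVec, ← Matrix.mulVec_mulVec, e]
  have hex2 : ∀ w : Fin r → ℂ, ∃ a : Matrix (Fin r) (Fin r) ℂ,
      a * m₁ = m₁ * a ∧ a * m₂ = m₂ * a ∧ a *ᵥ v = w := by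
    intro w
    obtain ⟨a, ha, e⟩ := hex w
    exact ⟨a, (hc m₁ rfl hcomm a ha).symm, (hc m₂ hcomm.symm rfl a ha).symm, e⟩
  choose f f1 f2 fv using hex2
  let L : (Fin r → ℂ) →ₗ[ℂ] Matrix (Fin r) (Fin r) ℂ :=
    { toFun := f
      map_add' := by
        intro x y
        apply hu _ _ (f1 _) (f2 _)
        · rw [add_mul, mul_add, f1, f1]
        · rw [add_mul, mul_add, f2, f2]
        · rw [Matrix.add_mulVec, fv, fv, fv]
      map_smul' := by
        intro c x
        apply hu _ _ (f1 _) (f2 _)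
        · simp [f1]
        · simp [f2]
        · simp [Matrix.smul_mulVec, fv] }
  have hLf : ∀ w, L w = f w := fun _ => rfl
  have hLv : L v = 1 := by
    rw [hLf]
    exact hu _ _ (f1 _) (f2 _) (by simp) (by simp) (by simp [fv])
  have hset : {w : Fin r → ℂ | ∃ g : GL (Fin r) ℂ,
        g.val * m₁ = m₁ * g.val ∧ g.val * m₂ = m₂ * g.val ∧ Matrix.mulVec g.val v = w}
      = {w | (L w).det ≠ 0} := by
    ext w
    constructor
    · rintro ⟨g, g1, g2, gv⟩
      have : L w = g.val := hu _ _ (f1 _) (f2 _) g1 g2 (by rw [hLf, fv, gv])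
      show (L w).det ≠ 0
      rw [this]
      exact ((Matrix.isUnit_iff_isUnit_det _).1 g.isUnit).ne_zero
    · intro h
      exact ⟨Matrix.GeneralLinearGroup.mkOfDetNeZero (L w) h, f1 w, f2 w, fv w⟩
  rw [hset]
  constructor
  · have hcont : Continuous fun w => (L w).det :=
      (LinearMap.continuous_of_finiteDimensional L).matrix_det
    exact isOpen_ne_fun hcont continuous_const
  · intro w
    have hfin : {t : ℂ | (-(L w)).charpoly.IsRoot t}.Finite :=
      Polynomial.finite_setOfPred_isRoot (Matrix.charpoly_monic _).ne_zero
    have hd : Dense {t : ℂ | (-(L w)).charpoly.IsRoot t}ᶜ := hfin.countable.dense_compl ℂ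
    have hm : Continuous fun t : ℂ => w + t • v := by fun_prop
    have := map_mem_closure hm (hd 0) (t := {w | (L w).det ≠ 0}) (by
      intro t ht hdet
      apply ht
      show Polynomial.eval t _ = 0
      rw [Matrix.eval_charpoly, ← hdet, map_add, map_smul, hLv, sub_neg_eq_add, add_comm,
        Matrix.smul_one_eq_diagonal]
      rfl)
    simpa using this
end

section
/- Let r ≥ 1 and let C₂M_r(ℂ) ⊆ M_r(ℂ) × M_r(ℂ) denote the set of commuting pairs, with the subspace topology from the standard topology on M_r(ℂ) × M_r(ℂ). Then the subset of C₂M_r(ℂ) consisting of commuting pairs (m₁, m₂) that admit a cyclic vector v ∈ ℂʳ is open and dense in C₂M_r(ℂ). -/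
open Matrix

/-- The commuting variety: the set of commuting pairs of `r × r` complex matrices, with
its subspace topology. -/
def commVariety (r : ℕ) : Set (Matrix (Fin r) (Fin r) ℂ × Matrix (Fin r) (Fin r) ℂ) :=
  {p | p.1 * p.2 = p.2 * p.1}

theorem aux_cyc_iff (r : ℕ) (m₁ m₂ : Matrix (Fin r) (Fin r) ℂ) (v : Fin r → ℂ) :
    CyclicVec r m₁ m₂ v ↔ ∃ w : Fin r → FreeAlgebra ℂ (Fin 2),
      (Matrix.of fun j i => (FreeAlgebra.lift ℂ ![m₁, m₂] (w j) *ᵥ v) i).det ≠ 0 := by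
  have hadj : Algebra.adjoin ℂ {m₁, m₂} = (FreeAlgebra.lift ℂ ![m₁, m₂]).range := by
    rw [← Algebra.adjoin_range_eq_range_freeAlgebra_lift]
    congr 1
    simp [Matrix.range_cons, Set.pair_comm]
  unfold CyclicVec
  rw [hadj, Set.eq_univ_iff_forall]
  constructor
  · intro h
    have h' : ∀ j : Fin r, ∃ w : FreeAlgebra ℂ (Fin 2),
        FreeAlgebra.lift ℂ ![m₁, m₂] w *ᵥ v = Pi.single j 1 := by
      intro j
      obtain ⟨a, ⟨w, rfl⟩, hw⟩ := h (Pi.single j 1)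
      exact ⟨w, hw⟩
    choose w hw using h'
    refine ⟨w, ?_⟩
    have : (Matrix.of fun j i => (FreeAlgebra.lift ℂ ![m₁, m₂] (w j) *ᵥ v) i) = 1 := by
      ext j i
      simp [hw, Matrix.one_apply, Pi.single_apply, eq_comm]
    rw [this]
    simp
  · rintro ⟨w, hw⟩ y
    set M : Matrix (Fin r) (Fin r) ℂ :=
      Matrix.of fun j i => (FreeAlgebra.lift ℂ ![m₁, m₂] (w j) *ᵥ v) i with hM
    have hu : IsUnit M.det := isUnit_iff_ne_zero.mpr hw
    refine ⟨_, ⟨∑ j, (y ᵥ* M⁻¹) j • w j, rfl⟩, ?_⟩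
    have h1 : (y ᵥ* M⁻¹) ᵥ* M = y := by
      rw [Matrix.vecMul_vecMul, Matrix.nonsing_inv_mul _ hu, Matrix.vecMul_one]
    conv_rhs => rw [← h1]
    ext i
    simp [Matrix.sum_mulVec, Matrix.smul_mulVec, Matrix.vecMul, dotProduct, hM]

theorem aux_lift_cont (r : ℕ) (w : FreeAlgebra ℂ (Fin 2)) :
    Continuous fun p : Matrix (Fin r) (Fin r) ℂ × Matrix (Fin r) (Fin r) ℂ =>
      FreeAlgebra.lift ℂ ![p.1, p.2] w := by
  induction w with
  | grade0 c => simpa using continuous_const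
  | grade1 x => fin_cases x <;> simp <;> fun_prop
  | mul a b ha hb => simp only [map_mul]; exact Continuous.mul ha hb
  | add a b ha hb => simp only [map_add]; exact Continuous.add ha hb

theorem aux_open (r : ℕ) (v : Fin r → ℂ) :
    IsOpen {p : Matrix (Fin r) (Fin r) ℂ × Matrix (Fin r) (Fin r) ℂ | CyclicVec r p.1 p.2 v} := by
  simp_rw [aux_cyc_iff, Set.ofPred_exists]
  refine isOpen_iUnion fun w => ?_
  refine isOpen_ne.preimage (f := fun p : Matrix (Fin r) (Fin r) ℂ × Matrix (Fin r) (Fin r) ℂ =>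
    (Matrix.of fun j i => (FreeAlgebra.lift ℂ ![p.1, p.2] (w j) *ᵥ v) i).det) ?_
  refine Continuous.matrix_det ?_
  refine continuous_matrix fun j i => ?_
  exact (continuous_apply i).comp ((aux_lift_cont r (w j)).matrix_mulVec continuous_const)

open Polynomial in
theorem aux_finite (r : ℕ) (A R B : Matrix (Fin r) (Fin r) ℂ) (v : Fin r → ℂ)
    (h : CyclicVec r A R v) : {s : ℂ | ¬ CyclicVec r A (R + s • B) v}.Finite := by
  obtain ⟨w, hw⟩ := (aux_cyc_iff _ _ _ _).1 h
  let Ap : Matrix (Fin r) (Fin r) ℂ[X] := A.map C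
  let Rp : Matrix (Fin r) (Fin r) ℂ[X] := R.map C + (X : ℂ[X]) • B.map C
  let P : ℂ[X] := (Matrix.of fun j i =>
    (FreeAlgebra.lift ℂ ![Ap, Rp] (w j) *ᵥ (fun k => C (v k))) i).det
  have key : ∀ s : ℂ, P.eval s =
      (Matrix.of fun j i => (FreeAlgebra.lift ℂ ![A, R + s • B] (w j) *ᵥ v) i).det := by
    intro s
    have e1 : ((aeval (R := ℂ) s).mapMatrix.comp (FreeAlgebra.lift ℂ ![Ap, Rp])) =
        FreeAlgebra.lift ℂ ![A, R + s • B] := by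
      apply FreeAlgebra.hom_ext
      funext x
      fin_cases x <;> ext i j <;> simp [Ap, Rp]
      ring
    rw [← coe_evalRingHom, RingHom.map_det]
    congr 1
    ext j i
    rw [← e1]
    simp [Matrix.mulVec, dotProduct, eval_finsetSum, coe_aeval_eq_eval]
  have hP : P ≠ 0 := by
    rintro h0
    have := key 0
    rw [h0] at this
    simp at this
    exact hw this.symm
  refine (Polynomial.finite_setOfPred_isRoot hP).subset ?_
  intro s hs
  by_contra hr
  apply hs
  rw [aux_cyc_iff]
  refine ⟨w, ?_⟩
  rw [← key]
  exact hr

open Polynomial in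
theorem aux_mod {M : Type} [AddCommGroup M] [Module ℂ[X] M] [Module.Finite ℂ[X] M]
    (hM : Module.IsTorsion ℂ[X] M) :
    ∃ (ι : Type) (_ : Fintype ι) (x : ι → M) (c : ι → ℂ) (ρ : M →ₗ[ℂ[X]] M),
      Function.Injective c ∧ (∀ i, ρ (x i) = C (c i) • x i) ∧
      ∀ y, ∃ q : ι → ℂ[X], y = ∑ i, q i • x i := by
  classical
  obtain ⟨ι, hι, p, -, k, ⟨e⟩⟩ := Module.equiv_directSum_of_isTorsion hM
  let e' := e.trans (DirectSum.linearEquivFunOnFintype ℂ[X] ι _)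
  let c : ι → ℂ := fun i => ((Fintype.equivFin ι i : ℕ) : ℂ)
  refine ⟨ι, hι, fun i => e'.symm (Pi.single i 1), c,
    e'.symm.toLinearMap ∘ₗ (LinearMap.pi fun i => C (c i) • LinearMap.proj i) ∘ₗ e'.toLinearMap,
    ?_, ?_, ?_⟩
  · intro i j hij
    simpa [c, Fin.val_inj] using hij
  · intro i
    simp only [LinearMap.comp_apply, LinearEquiv.coe_coe, LinearEquiv.apply_symm_apply]
    rw [← map_smul]
    congr 1
    funext j
    by_cases hj : j = i
    · subst hj; simp
    · simp [hj]
  · intro y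
    have hq : ∀ i, ∃ q : ℂ[X], Submodule.Quotient.mk q = e' y i :=
      fun i => Submodule.Quotient.mk_surjective _ _
    choose q hq using hq
    refine ⟨q, ?_⟩
    apply e'.injective
    simp only [map_sum, map_smul, LinearEquiv.apply_symm_apply]
    funext j
    rw [Finset.sum_apply, Finset.sum_eq_single j]
    · rw [← hq j, Pi.smul_apply, Pi.single_eq_same]
      change _ = q j • Submodule.Quotient.mk (1 : ℂ[X])
      rw [← Submodule.Quotient.mk_smul]; simp
    · intro i _ hij
      simp [Pi.single_eq_of_ne hij.symm]
    · simp

open Polynomial in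
theorem aux_exists (r : ℕ) (A : Matrix (Fin r) (Fin r) ℂ) :
    ∃ (R : Matrix (Fin r) (Fin r) ℂ) (v : Fin r → ℂ), A * R = R * A ∧ CyclicVec r A R v := by
  classical
  let f : Module.End ℂ (Fin r → ℂ) := Matrix.toLinAlgEquiv' A
  obtain ⟨ι, hι, x, c, ρ, hc, hρ, hy⟩ := aux_mod
    (M := Module.AEval' f) (Module.AEval.isTorsion_of_finiteDimensional ℂ _ f)
  let o := Module.AEval'.of f
  let g : Module.End ℂ (Fin r → ℂ) :=
    { toFun := fun u => o.symm (ρ (o u))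
      map_add' := by intro a b; simp
      map_smul' := by
        intro a b
        have : o (a • b) = (C a : ℂ[X]) • o b := by
          rw [Module.AEval.C_smul, map_smul]
        rw [this, map_smul, Module.AEval.C_smul]; simp }
  have hfg : f * g = g * f := by
    refine LinearMap.ext fun u => ?_
    change f (o.symm (ρ (o u))) = o.symm (ρ (o (f u)))
    have h1 : o (f u) = (X : ℂ[X]) • o u := (Module.AEval.X_smul_of f u).symm
    rw [h1, map_smul, Module.AEval.of_symm_X_smul]
    rfl
  have hgx : ∀ i, g (o.symm (x i)) = c i • o.symm (x i) := by
    intro i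
    change o.symm (ρ (o (o.symm (x i)))) = _
    rw [LinearEquiv.apply_symm_apply, hρ, Module.AEval.C_smul, map_smul]
  let R : Matrix (Fin r) (Fin r) ℂ := Matrix.toLinAlgEquiv'.symm g
  have hgR : Matrix.toLinAlgEquiv' R = g := AlgEquiv.apply_symm_apply _ _
  refine ⟨R, ∑ i, o.symm (x i), ?_, ?_⟩
  · apply (Matrix.toLinAlgEquiv' (R := ℂ) (n := Fin r)).injective
    rw [map_mul, map_mul, hgR]
    exact hfg
  · unfold CyclicVec
    rw [Set.eq_univ_iff_forall]
    intro y
    obtain ⟨q, hq⟩ := hy (o y)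
    let L : ι → ℂ[X] := fun i => Lagrange.basis Finset.univ c i
    refine ⟨∑ i, aeval A (q i) * aeval R (L i), ?_, ?_⟩
    · refine Subalgebra.sum_mem _ fun i _ => Subalgebra.mul_mem _ ?_ ?_
      · exact Algebra.adjoin_mono (by simp) (aeval_mem_adjoin_singleton ℂ A)
      · exact Algebra.adjoin_mono (by simp) (aeval_mem_adjoin_singleton ℂ R)
    · rw [← Matrix.toLinAlgEquiv'_apply, map_sum Matrix.toLinAlgEquiv']
      have hL : ∀ i, aeval g (L i) (∑ j, o.symm (x j)) = o.symm (x i) := by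
        intro i
        rw [map_sum, Finset.sum_eq_single i]
        · rw [Module.End.aeval_apply_of_mem_apply_eq_smul (hgx i)]
          simp [L, Lagrange.eval_basis_self hc.injOn]
        · intro j _ hj
          rw [Module.End.aeval_apply_of_mem_apply_eq_smul (hgx j)]
          simp [L, Lagrange.eval_basis_of_ne hj.symm]
        · simp
      have hy' : y = ∑ i, aeval f (q i) (o.symm (x i)) := by
        have := congrArg o.symm hq
        rw [LinearEquiv.symm_apply_apply, map_sum] at this
        exact this
      rw [LinearMap.sum_apply]
      conv_rhs => rw [hy']
      refine Finset.sum_congr rfl fun i _ => ?_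
      rw [map_mul, ← aeval_algHom_apply, ← aeval_algHom_apply, hgR, Module.End.mul_apply, hL]

theorem aux_resc (r : ℕ) (A R B : Matrix (Fin r) (Fin r) ℂ) (v : Fin r → ℂ) (t : ℂ)
    (ht2' : t ≠ 0) (hc : CyclicVec r A (R + t⁻¹ • B) v) : CyclicVec r A (B + t • R) v := by
  unfold CyclicVec at hc ⊢
  rw [Set.eq_univ_iff_forall] at hc ⊢
  intro y
  obtain ⟨a, ha, hay⟩ := hc y
  refine ⟨a, ?_, hay⟩
  refine (Algebra.adjoin_le ?_ : Algebra.adjoin ℂ {A, R + t⁻¹ • B} ≤ _) ha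
  rintro z (rfl | rfl)
  · exact Algebra.subset_adjoin (by simp)
  · have : R + t⁻¹ • B = t⁻¹ • (B + t • R) := by
      rw [smul_add, smul_smul, inv_mul_cancel₀ ht2', one_smul, add_comm]
    rw [this]
    exact Subalgebra.smul_mem _ (Algebra.subset_adjoin (by simp)) _

theorem aux_isOpen (r : ℕ) :
    IsOpen {p : commVariety r | ∃ v : Fin r → ℂ, CyclicVec r p.1.1 p.1.2 v} := by
  rw [Set.ofPred_exists]
  exact isOpen_iUnion fun v => (aux_open r v).preimage continuous_subtype_val

theorem aux_ev (r : ℕ) (A R B : Matrix (Fin r) (Fin r) ℂ) (v : Fin r → ℂ)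
    (hv : CyclicVec r A R v) :
    ∀ᶠ t : ℂ in nhdsWithin 0 {0}ᶜ, CyclicVec r A (B + t • R) v := by
  have hfin := aux_finite r A R B v hv
  have hev : ∀ᶠ s in Bornology.cobounded ℂ, s ∉ {s : ℂ | ¬ CyclicVec r A (R + s • B) v} :=
    Bornology.isBounded_def.1 hfin.isBounded
  have h2 := (Filter.tendsto_inv₀_nhdsNE_zero (α := ℂ)).eventually hev
  filter_upwards [h2, self_mem_nhdsWithin] with t ht1 ht2
  simp only [Set.mem_setOf_eq, not_not] at ht1
  exact aux_resc r A R B v t ht2 ht1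

/-- Within the commuting variety `C₂M_r(ℂ)`, the locus of commuting pairs admitting a
cyclic vector is open and dense (in the subspace topology). -/
theorem stmt15 (r : ℕ) (hr : 1 ≤ r) :
    IsOpen {p : commVariety r | ∃ v : Fin r → ℂ, CyclicVec r p.1.1 p.1.2 v} ∧
      Dense {p : commVariety r | ∃ v : Fin r → ℂ, CyclicVec r p.1.1 p.1.2 v} := by
  constructor
  · exact aux_isOpen r
  · rintro ⟨⟨A, B⟩, hAB⟩
    have hAB' : A * B = B * A := hAB
    obtain ⟨R, v, hAR, hv⟩ := aux_exists r A
    let γ : ℂ → commVariety r := fun t => ⟨(A, B + t • R), by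
      change A * (B + t • R) = (B + t • R) * A
      rw [mul_add, add_mul, hAB', Matrix.mul_smul, Matrix.smul_mul, hAR]⟩
    have hγ : Continuous γ := by
      refine Continuous.subtype_mk ?_ _
      fun_prop
    have h0 : γ 0 = ⟨(A, B), hAB⟩ := by simp [γ]
    have ht : Filter.Tendsto γ (nhdsWithin 0 {0}ᶜ) (nhds ⟨(A, B), hAB⟩) := by
      rw [← h0]
      exact hγ.continuousAt.tendsto.mono_left nhdsWithin_le_nhds
    refine mem_closure_of_tendsto ht ?_
    filter_upwards [aux_ev r A R B v hv] with t ht1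
    exact ⟨v, ht1⟩
end

section
/- Let r ≥ 1. For a triple (m₁, m₂, v) where (m₁, m₂) is a commuting pair of r×r complex matrices and v ∈ ℂʳ is cyclic for (m₁, m₂), the set I(m₁, m₂, v) = {p ∈ ℂ[z₁, z₂] : p(m₁, m₂).mulVec v = 0} is an ideal of ℂ[z₁, z₂] with dim_ℂ (ℂ[z₁, z₂]/I(m₁, m₂, v)) = r, and the assignment (m₁, m₂, v) ↦ I(m₁, m₂, v) induces a bijection from the set of GL_r(ℂ)-orbits of such triples onto the set of ideals I of ℂ[z₁, z₂] with dim_ℂ (ℂ[z₁, z₂]/I) = r. This is the set-theoretic content of the identification of the GIT quotient E //_χ GL_r(ℂ) with the Hilbert scheme (𝔸²)^[r] of length-r subschemes of the affine plane. -/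
open Matrix

/-- Evaluation of a two-variable polynomial at a commuting pair of matrices, as a
`ℂ`-algebra homomorphism `ℂ[z₁, z₂] → M_r(ℂ)` (it factors through the commutative
subalgebra generated by the pair). -/
noncomputable def evalPair (r : ℕ) (m₁ m₂ : Matrix (Fin r) (Fin r) ℂ)
    (hcomm : m₁ * m₂ = m₂ * m₁) :
    MvPolynomial (Fin 2) ℂ →ₐ[ℂ] Matrix (Fin r) (Fin r) ℂ :=
  letI : CommRing (Algebra.adjoin ℂ ({m₁, m₂} : Set (Matrix (Fin r) (Fin r) ℂ))) :=
    Algebra.adjoinCommRingOfComm ℂ (by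
      rintro a (rfl | rfl) b (rfl | rfl) <;> simp [hcomm])
  (Algebra.adjoin ℂ ({m₁, m₂} : Set (Matrix (Fin r) (Fin r) ℂ))).val.comp
    (MvPolynomial.aeval
      ![⟨m₁, Algebra.subset_adjoin (by simp)⟩, ⟨m₂, Algebra.subset_adjoin (by simp)⟩])

/-- The ideal `I(m₁, m₂, v) = {p ∈ ℂ[z₁, z₂] : p(m₁, m₂) v = 0}` of polynomials
annihilating the vector `v` through evaluation at the commuting pair `(m₁, m₂)`. -/
noncomputable def annIdeal (r : ℕ) (m₁ m₂ : Matrix (Fin r) (Fin r) ℂ)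
    (hcomm : m₁ * m₂ = m₂ * m₁) (v : Fin r → ℂ) : Ideal (MvPolynomial (Fin 2) ℂ) where
  carrier := {p | Matrix.mulVec (evalPair r m₁ m₂ hcomm p) v = 0}
  zero_mem' := by simp [Matrix.zero_mulVec]
  add_mem' := by
    intro a b ha hb
    simp only [Set.mem_setOf_eq, map_add, Matrix.add_mulVec] at *
    rw [ha, hb, add_zero]
  smul_mem' := by
    intro c p hp
    simp only [Set.mem_setOf_eq, smul_eq_mul, _root_.map_mul] at *
    rw [← Matrix.mulVec_mulVec, hp, Matrix.mulVec_zero]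

theorem evalPair_X0 (r : ℕ) (m₁ m₂ : Matrix (Fin r) (Fin r) ℂ) (h : m₁ * m₂ = m₂ * m₁) :
    evalPair r m₁ m₂ h (MvPolynomial.X 0) = m₁ := by
  simp [evalPair]

theorem evalPair_X1 (r : ℕ) (m₁ m₂ : Matrix (Fin r) (Fin r) ℂ) (h : m₁ * m₂ = m₂ * m₁) :
    evalPair r m₁ m₂ h (MvPolynomial.X 1) = m₂ := by
  simp [evalPair]

theorem evalPair_mem (r : ℕ) (m₁ m₂ : Matrix (Fin r) (Fin r) ℂ) (h : m₁ * m₂ = m₂ * m₁)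
    (p : MvPolynomial (Fin 2) ℂ) : evalPair r m₁ m₂ h p ∈ Algebra.adjoin ℂ {m₁, m₂} := by
  unfold evalPair
  exact Subtype.property _

theorem exists_evalPair (r : ℕ) (m₁ m₂ : Matrix (Fin r) (Fin r) ℂ) (h : m₁ * m₂ = m₂ * m₁)
    (a : Matrix (Fin r) (Fin r) ℂ) (ha : a ∈ Algebra.adjoin ℂ {m₁, m₂}) :
    ∃ p, evalPair r m₁ m₂ h p = a := by
  have : Algebra.adjoin ℂ {m₁, m₂} ≤ (evalPair r m₁ m₂ h).range := by
    rw [Algebra.adjoin_le_iff]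
    rintro x (rfl | rfl)
    · exact ⟨_, evalPair_X0 r _ _ h⟩
    · exact ⟨_, evalPair_X1 r _ _ h⟩
  exact this ha

/-- evaluation at the pair and at the vector, as a linear map -/
noncomputable def evMap (r : ℕ) (m₁ m₂ : Matrix (Fin r) (Fin r) ℂ) (h : m₁ * m₂ = m₂ * m₁)
    (v : Fin r → ℂ) : MvPolynomial (Fin 2) ℂ →ₗ[ℂ] (Fin r → ℂ) where
  toFun p := Matrix.mulVec (evalPair r m₁ m₂ h p) v
  map_add' p q := by rw [map_add, Matrix.add_mulVec]
  map_smul' c p := by rw [map_smul, Matrix.smul_mulVec]; rfl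

theorem evMap_surj (r : ℕ) (m₁ m₂ : Matrix (Fin r) (Fin r) ℂ) (h : m₁ * m₂ = m₂ * m₁)
    (v : Fin r → ℂ) (hc : CyclicVec r m₁ m₂ v) :
    Function.Surjective (evMap r m₁ m₂ h v) := by
  intro w
  have hw : w ∈ {w | ∃ a ∈ Algebra.adjoin ℂ {m₁, m₂}, Matrix.mulVec a v = w} := by
    rw [hc]; trivial
  obtain ⟨a, ha, rfl⟩ := hw
  obtain ⟨p, rfl⟩ := exists_evalPair r m₁ m₂ h a ha
  exact ⟨p, rfl⟩

theorem evMap_ker (r : ℕ) (m₁ m₂ : Matrix (Fin r) (Fin r) ℂ) (h : m₁ * m₂ = m₂ * m₁)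
    (v : Fin r → ℂ) :
    LinearMap.ker (evMap r m₁ m₂ h v) = (annIdeal r m₁ m₂ h v).restrictScalars ℂ := by
  ext p; rfl

theorem evMap_mul (r : ℕ) (m₁ m₂ : Matrix (Fin r) (Fin r) ℂ) (h : m₁ * m₂ = m₂ * m₁)
    (v : Fin r → ℂ) (p q : MvPolynomial (Fin 2) ℂ) :
    evMap r m₁ m₂ h v (p * q) = (evalPair r m₁ m₂ h p).mulVec (evMap r m₁ m₂ h v q) := by
  simp [evMap]

theorem evalPair_conj (r : ℕ) (m₁ m₂ n₁ n₂ g : Matrix (Fin r) (Fin r) ℂ)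
    (hm : m₁ * m₂ = m₂ * m₁) (hn : n₁ * n₂ = n₂ * n₁)
    (h1 : g * m₁ = n₁ * g) (h2 : g * m₂ = n₂ * g) (p : MvPolynomial (Fin 2) ℂ) :
    g * evalPair r m₁ m₂ hm p = evalPair r n₁ n₂ hn p * g := by
  induction p using MvPolynomial.induction_on with
  | C a =>
    rw [← MvPolynomial.algebraMap_eq, AlgHom.commutes, AlgHom.commutes]
    exact (Algebra.commutes a g).symm
  | add p q hp hq => rw [map_add, map_add, mul_add, add_mul, hp, hq]
  | mul_X p i hp =>
    rw [_root_.map_mul, _root_.map_mul, ← mul_assoc, hp, mul_assoc, mul_assoc]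
    congr 1
    fin_cases i
    · simpa [evalPair_X0] using h1
    · simpa [evalPair_X1] using h2

theorem part1 (r : ℕ) (m₁ m₂ : Matrix (Fin r) (Fin r) ℂ) (h : m₁ * m₂ = m₂ * m₁)
    (v : Fin r → ℂ) (hc : CyclicVec r m₁ m₂ v) :
    Module.finrank ℂ (MvPolynomial (Fin 2) ℂ ⧸ annIdeal r m₁ m₂ h v) = r := by
  have e1 := (evMap r m₁ m₂ h v).quotKerEquivOfSurjective (evMap_surj r m₁ m₂ h v hc)
  rw [evMap_ker] at e1
  have e2 := Submodule.Quotient.restrictScalarsEquiv ℂ (annIdeal r m₁ m₂ h v)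
  have := (e2.symm.trans e1).finrank_eq
  simpa using this

theorem part2a (r : ℕ) (m₁ m₂ n₁ n₂ : Matrix (Fin r) (Fin r) ℂ)
    (hm : m₁ * m₂ = m₂ * m₁) (hn : n₁ * n₂ = n₂ * n₁) (v w : Fin r → ℂ)
    (hv : CyclicVec r m₁ m₂ v) (hw : CyclicVec r n₁ n₂ w)
    (hI : annIdeal r m₁ m₂ hm v = annIdeal r n₁ n₂ hn w) :
    ∃ g : GL (Fin r) ℂ, g.val * m₁ * g⁻¹.val = n₁ ∧ g.val * m₂ * g⁻¹.val = n₂ ∧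
            Matrix.mulVec g.val v = w := by
  have hk : LinearMap.ker (evMap r m₁ m₂ hm v) = LinearMap.ker (evMap r n₁ n₂ hn w) := by
    rw [evMap_ker, evMap_ker, hI]
  let e : (Fin r → ℂ) ≃ₗ[ℂ] (Fin r → ℂ) :=
    ((evMap r m₁ m₂ hm v).quotKerEquivOfSurjective (evMap_surj r m₁ m₂ hm v hv)).symm.trans
      ((Submodule.quotEquivOfEq _ _ hk).trans
        ((evMap r n₁ n₂ hn w).quotKerEquivOfSurjective (evMap_surj r n₁ n₂ hn w hw)))
  have he : ∀ p, e (evMap r m₁ m₂ hm v p) = evMap r n₁ n₂ hn w p := by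
    intro p
    have : ((evMap r m₁ m₂ hm v).quotKerEquivOfSurjective
        (evMap_surj r m₁ m₂ hm v hv)).symm (evMap r m₁ m₂ hm v p) = Submodule.Quotient.mk p := by
      rw [LinearEquiv.symm_apply_eq]; rfl
    simp only [e, LinearEquiv.trans_apply, this]
    rfl
  let g : GL (Fin r) ℂ := ⟨LinearMap.toMatrix' e.toLinearMap, LinearMap.toMatrix' e.symm.toLinearMap,
    by rw [← LinearMap.toMatrix'_comp]; simp, by rw [← LinearMap.toMatrix'_comp]; simp⟩
  have hg : ∀ x, g.val.mulVec x = e x := fun x => LinearMap.toMatrix'_mulVec _ _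
  have key : ∀ q, g.val * evalPair r m₁ m₂ hm q = evalPair r n₁ n₂ hn q * g.val := by
    intro q
    apply Matrix.ext_of_mulVec_single
    intro i
    obtain ⟨p, hp⟩ := evMap_surj r m₁ m₂ hm v hv (Pi.single i 1)
    rw [← hp, ← Matrix.mulVec_mulVec, ← Matrix.mulVec_mulVec, ← evMap_mul, hg, hg, he, he,
      evMap_mul]
  refine ⟨g, ?_, ?_, ?_⟩
  · have := key (MvPolynomial.X 0)
    rw [evalPair_X0, evalPair_X0] at this
    rw [this, mul_assoc, Units.mul_inv, mul_one]
  · have := key (MvPolynomial.X 1)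
    rw [evalPair_X1, evalPair_X1] at this
    rw [this, mul_assoc, Units.mul_inv, mul_one]
  · have := he 1
    rw [hg]
    simpa [evMap] using this

theorem part2b (r : ℕ) (m₁ m₂ n₁ n₂ : Matrix (Fin r) (Fin r) ℂ)
    (hm : m₁ * m₂ = m₂ * m₁) (hn : n₁ * n₂ = n₂ * n₁) (v w : Fin r → ℂ)
    (g : GL (Fin r) ℂ) (h1 : g.val * m₁ * g⁻¹.val = n₁) (h2 : g.val * m₂ * g⁻¹.val = n₂)
    (h3 : Matrix.mulVec g.val v = w) :
    annIdeal r m₁ m₂ hm v = annIdeal r n₁ n₂ hn w := by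
  ext p
  change (evalPair r m₁ m₂ hm p).mulVec v = 0 ↔ (evalPair r n₁ n₂ hn p).mulVec w = 0
  have key := evalPair_conj r m₁ m₂ n₁ n₂ g.val hm hn
    (by rw [← h1, mul_assoc _ _ g.val, Units.inv_mul, mul_one])
    (by rw [← h2, mul_assoc _ _ g.val, Units.inv_mul, mul_one]) p
  rw [← h3, Matrix.mulVec_mulVec, ← key, ← Matrix.mulVec_mulVec]
  constructor
  · intro h; rw [h, Matrix.mulVec_zero]
  · intro h
    have h' := congrArg (fun x => Matrix.mulVec g⁻¹.val x) h
    simpa only [Matrix.mulVec_mulVec, ← mul_assoc, Units.inv_mul, one_mul,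
      Matrix.mulVec_zero] using h'

theorem part3 (r : ℕ) (hr : 1 ≤ r) (I : Ideal (MvPolynomial (Fin 2) ℂ))
    (hI : Module.finrank ℂ (MvPolynomial (Fin 2) ℂ ⧸ I) = r) :
    ∃ (m₁ m₂ : Matrix (Fin r) (Fin r) ℂ) (hcomm : m₁ * m₂ = m₂ * m₁) (v : Fin r → ℂ),
          CyclicVec r m₁ m₂ v ∧ annIdeal r m₁ m₂ hcomm v = I := by
  haveI : Module.Finite ℂ (MvPolynomial (Fin 2) ℂ ⧸ I) :=
    Module.finite_of_finrank_pos (by omega)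
  let b : Module.Basis (Fin r) ℂ (MvPolynomial (Fin 2) ℂ ⧸ I) := Module.finBasisOfFinrankEq _ _ hI
  let φ : MvPolynomial (Fin 2) ℂ →ₐ[ℂ] Matrix (Fin r) (Fin r) ℂ :=
    (Algebra.leftMulMatrix b).comp (Ideal.Quotient.mkₐ ℂ I)
  have hc : φ (MvPolynomial.X 0) * φ (MvPolynomial.X 1)
      = φ (MvPolynomial.X 1) * φ (MvPolynomial.X 0) := by
    rw [← _root_.map_mul, ← _root_.map_mul, mul_comm]
  have hφ : evalPair r _ _ hc = φ := by
    apply MvPolynomial.algHom_ext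
    intro i
    fin_cases i
    · exact evalPair_X0 _ _ _ hc
    · exact evalPair_X1 _ _ _ hc
  have hv : ∀ p, (evalPair r _ _ hc p).mulVec (b.repr 1) = b.repr (Ideal.Quotient.mk I p) := by
    intro p
    rw [hφ]
    have := Algebra.leftMulMatrix_mulVec_repr b (Ideal.Quotient.mk I p) 1
    rw [mul_one] at this
    exact this
  refine ⟨_, _, hc, b.repr 1, ?_, ?_⟩
  · rw [CyclicVec, Set.eq_univ_iff_forall]
    intro w
    obtain ⟨p, hp⟩ := Ideal.Quotient.mk_surjective (b.equivFun.symm w)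
    refine ⟨_, evalPair_mem r _ _ hc p, ?_⟩
    rw [hv, hp]
    exact b.equivFun.apply_symm_apply w
  · ext p
    change (evalPair r _ _ hc p).mulVec (b.repr 1) = 0 ↔ _
    rw [hv, ← Ideal.Quotient.eq_zero_iff_mem]
    exact b.equivFun.map_eq_zero_iff (x := Ideal.Quotient.mk I p)

/-- For triples `(m₁, m₂, v)` of a commuting pair with a cyclic vector:
the annihilating ideal has `r`-dimensional quotient; two such triples have the same
annihilating ideal iff they are `GL r ℂ`-conjugate; and every ideal of `ℂ[z₁, z₂]` with
`r`-dimensional quotient arises this way.  This identifies `GL r ℂ`-orbits of such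
triples with points of the Hilbert scheme `(𝔸²)^[r]`. -/
theorem stmt17 (r : ℕ) (hr : 1 ≤ r) :
    (∀ (m₁ m₂ : Matrix (Fin r) (Fin r) ℂ) (hcomm : m₁ * m₂ = m₂ * m₁) (v : Fin r → ℂ),
      CyclicVec r m₁ m₂ v →
        Module.finrank ℂ (MvPolynomial (Fin 2) ℂ ⧸ annIdeal r m₁ m₂ hcomm v) = r) ∧
    (∀ (m₁ m₂ n₁ n₂ : Matrix (Fin r) (Fin r) ℂ)
      (hm : m₁ * m₂ = m₂ * m₁) (hn : n₁ * n₂ = n₂ * n₁) (v w : Fin r → ℂ),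
      CyclicVec r m₁ m₂ v → CyclicVec r n₁ n₂ w →
        (annIdeal r m₁ m₂ hm v = annIdeal r n₁ n₂ hn w ↔
          ∃ g : GL (Fin r) ℂ, g.val * m₁ * g⁻¹.val = n₁ ∧ g.val * m₂ * g⁻¹.val = n₂ ∧
            Matrix.mulVec g.val v = w)) ∧
    (∀ I : Ideal (MvPolynomial (Fin 2) ℂ),
      Module.finrank ℂ (MvPolynomial (Fin 2) ℂ ⧸ I) = r →
        ∃ (m₁ m₂ : Matrix (Fin r) (Fin r) ℂ) (hcomm : m₁ * m₂ = m₂ * m₁) (v : Fin r → ℂ),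
          CyclicVec r m₁ m₂ v ∧ annIdeal r m₁ m₂ hcomm v = I) := by
  refine ⟨fun m₁ m₂ h v hc => part1 r m₁ m₂ h v hc, ?_, fun I hI => part3 r hr I hI⟩
  intro m₁ m₂ n₁ n₂ hm hn v w hv hw
  constructor
  · exact part2a r m₁ m₂ n₁ n₂ hm hn v w hv hw
  · rintro ⟨g, h1, h2, h3⟩
    exact part2b r m₁ m₂ n₁ n₂ hm hn v w g h1 h2 h3
end

section
/- Let A and B be commutative rings, let B → B′ be a faithfully flat homomorphism of commutative rings (B′ a faithfully flat B-algebra), and let M be a module carrying commuting A-module and B-module structures (i.e. an A-module and a B-module with SMulCommClass A B M), so that the base change M ⊗_B B′ carries an induced A-module structure. Then M is flat as an A-module if and only if M ⊗_B B′ is flat as an A-module. -/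
open scoped TensorProduct

/-- Innermost additive map. -/
noncomputable def swapAux0 (A B M N P : Type*) [CommRing A] [CommRing B]
    [AddCommGroup M] [Module A M] [Module B M] [SMulCommClass A B M] [SMulCommClass B A M]
    [AddCommGroup N] [Module B N] [AddCommGroup P] [Module A P] :
    M →+ N →+ P →+ (M ⊗[A] P) ⊗[B] N :=
  AddMonoidHom.mk' (fun m : M => AddMonoidHom.mk' (fun n : N => AddMonoidHom.mk'
    (fun p : P => (m ⊗ₜ[A] p) ⊗ₜ[B] n)
    (fun p q => by rw [TensorProduct.tmul_add, TensorProduct.add_tmul]))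
    (fun n n' => by ext p; exact TensorProduct.tmul_add _ _ _))
    (fun m m' => by
      ext n p
      change ((m + m') ⊗ₜ[A] p) ⊗ₜ[B] n = (m ⊗ₜ[A] p) ⊗ₜ[B] n + (m' ⊗ₜ[A] p) ⊗ₜ[B] n
      rw [TensorProduct.add_tmul, TensorProduct.add_tmul])

/-- Intermediate additive map. -/
noncomputable def swapAux (A B M N P : Type*) [CommRing A] [CommRing B]
    [AddCommGroup M] [Module A M] [Module B M] [SMulCommClass A B M] [SMulCommClass B A M]
    [AddCommGroup N] [Module B N] [AddCommGroup P] [Module A P] :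
    (M ⊗[B] N) →+ P →+ (M ⊗[A] P) ⊗[B] N :=
  TensorProduct.liftAddHom (swapAux0 A B M N P) (fun b m n => by
    ext p
    change ((b • m) ⊗ₜ[A] p) ⊗ₜ[B] n = (m ⊗ₜ[A] p) ⊗ₜ[B] (b • n)
    rw [← TensorProduct.smul_tmul', TensorProduct.smul_tmul])

theorem swapAux_tmul (A B M N P : Type*) [CommRing A] [CommRing B]
    [AddCommGroup M] [Module A M] [Module B M] [SMulCommClass A B M] [SMulCommClass B A M]
    [AddCommGroup N] [Module B N] [AddCommGroup P] [Module A P] (m : M) (n : N) (p : P) :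
    swapAux A B M N P (m ⊗ₜ n) p = (m ⊗ₜ p) ⊗ₜ n := rfl

theorem swapAux_smul (A B M N P : Type*) [CommRing A] [CommRing B]
    [AddCommGroup M] [Module A M] [Module B M] [SMulCommClass A B M] [SMulCommClass B A M]
    [AddCommGroup N] [Module B N] [AddCommGroup P] [Module A P] (a : A) (x : M ⊗[B] N) (p : P) :
    swapAux A B M N P (a • x) p = swapAux A B M N P x (a • p) := by
  induction x using TensorProduct.induction_on with
  | zero => rw [smul_zero, map_zero]; rfl
  | add x y hx hy => rw [smul_add, map_add, map_add, AddMonoidHom.add_apply,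
      AddMonoidHom.add_apply, hx, hy]
  | tmul m n =>
    rw [TensorProduct.smul_tmul', swapAux_tmul, swapAux_tmul, TensorProduct.smul_tmul]

/-- Exchange of the two right factors, additively. -/
noncomputable def swapHom (A B M N P : Type*) [CommRing A] [CommRing B]
    [AddCommGroup M] [Module A M] [Module B M] [SMulCommClass A B M] [SMulCommClass B A M]
    [AddCommGroup N] [Module B N] [AddCommGroup P] [Module A P] :
    (M ⊗[B] N) ⊗[A] P →+ (M ⊗[A] P) ⊗[B] N :=
  TensorProduct.liftAddHom (swapAux A B M N P) (swapAux_smul A B M N P)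

theorem swapHom_tmul (A B M N P : Type*) [CommRing A] [CommRing B]
    [AddCommGroup M] [Module A M] [Module B M] [SMulCommClass A B M] [SMulCommClass B A M]
    [AddCommGroup N] [Module B N] [AddCommGroup P] [Module A P] (m : M) (n : N) (p : P) :
    swapHom A B M N P ((m ⊗ₜ n) ⊗ₜ p) = (m ⊗ₜ p) ⊗ₜ n := rfl

theorem swapHom_swapHom (A B M N P : Type*) [CommRing A] [CommRing B]
    [AddCommGroup M] [Module A M] [Module B M] [SMulCommClass A B M] [SMulCommClass B A M]
    [AddCommGroup N] [Module B N] [AddCommGroup P] [Module A P] (x : (M ⊗[B] N) ⊗[A] P) :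
    swapHom B A M P N (swapHom A B M N P x) = x := by
  induction x using TensorProduct.induction_on with
  | zero => simp
  | add x y hx hy => simp only [map_add, hx, hy]
  | tmul x p =>
    induction x using TensorProduct.induction_on with
    | zero => simp
    | add x y hx hy => simp only [map_add, TensorProduct.add_tmul, hx, hy]
    | tmul m n => simp only [swapHom_tmul]

theorem swapHom_bijective (A B M N P : Type*) [CommRing A] [CommRing B]
    [AddCommGroup M] [Module A M] [Module B M] [SMulCommClass A B M] [SMulCommClass B A M]
    [AddCommGroup N] [Module B N] [AddCommGroup P] [Module A P] :
    Function.Bijective (swapHom A B M N P) :=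
  Function.bijective_iff_has_inverse.2
    ⟨swapHom B A M P N, swapHom_swapHom A B M N P, swapHom_swapHom B A M P N⟩

/-- `lTensor` as a linear map for the other ring. -/
noncomputable def lTensorB (A B M : Type*) {P Q : Type*} [CommRing A] [CommRing B]
    [AddCommGroup M] [Module A M] [Module B M] [SMulCommClass A B M] [SMulCommClass B A M]
    [AddCommGroup P] [Module A P] [AddCommGroup Q] [Module A Q] (f : P →ₗ[A] Q) :
    M ⊗[A] P →ₗ[B] M ⊗[A] Q where
  toFun := f.lTensor M
  map_add' := map_add _
  map_smul' b x := by
    induction x using TensorProduct.induction_on with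
    | zero => simp
    | add x y hx hy => simp only [smul_add, map_add, hx, hy]
    | tmul m p => simp [TensorProduct.smul_tmul']

theorem swapHom_lTensor (A B M N : Type*) {P Q : Type*} [CommRing A] [CommRing B]
    [AddCommGroup M] [Module A M] [Module B M] [SMulCommClass A B M] [SMulCommClass B A M]
    [AddCommGroup N] [Module B N]
    [AddCommGroup P] [Module A P] [AddCommGroup Q] [Module A Q] (f : P →ₗ[A] Q)
    (x : (M ⊗[B] N) ⊗[A] P) :
    swapHom A B M N Q (f.lTensor (M ⊗[B] N) x) =
      (lTensorB A B M f).rTensor N (swapHom A B M N P x) := by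
  induction x using TensorProduct.induction_on with
  | zero => simp
  | add x y hx hy => simp only [map_add, hx, hy]
  | tmul x p =>
    induction x using TensorProduct.induction_on with
    | zero => simp
    | add x y hx hy => simp only [map_add, TensorProduct.add_tmul, hx, hy]
    | tmul m n => simp [swapHom_tmul, lTensorB]

/-- Faithfully flat descent of flatness, affine-local form of the paper's Lemma 1.5:
for a module `M` with commuting `A`- and `B`-module structures and a faithfully flat
`B`-algebra `B′`, `M` is `A`-flat iff the base change `M ⊗[B] B′` is `A`-flat. -/
theorem stmt18 (A B B' M : Type*) [CommRing A] [CommRing B] [CommRing B']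
    [Algebra B B'] [Module.FaithfullyFlat B B']
    [AddCommGroup M] [Module A M] [Module B M]
    [SMulCommClass A B M] [SMulCommClass B A M] :
    Module.Flat A M ↔ Module.Flat A (M ⊗[B] B') := by
  rw [Module.Flat.iff_lTensor_injective', Module.Flat.iff_lTensor_injective']
  refine forall_congr' fun I => ?_
  have h1 : Function.Injective (I.subtype.lTensor M) ↔
      Function.Injective (lTensorB A B M I.subtype) := Iff.rfl
  rw [h1, ← Module.FaithfullyFlat.lTensor_injective_iff_injective B B',
    LinearMap.lTensor_inj_iff_rTensor_inj,
    ← (swapHom_bijective A B M B' A).1.of_comp_iff,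
    ← Function.Injective.of_comp_iff' _ (swapHom_bijective A B M B' I)]
  rw [show (swapHom A B M B' A) ∘ (I.subtype.lTensor (M ⊗[B] B')) =
    (lTensorB A B M I.subtype).rTensor B' ∘ (swapHom A B M B' I) from
    funext (swapHom_lTensor A B M B' I.subtype)]
end
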